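/- Let E₁ and E₂ be independent fractal percolations in ℝ^d (with values in [0,1]^d) with common integer scale M ≥ 2 and probabilities p₁, p₂ satisfying p₁ > M^{-d}, p₂ > M^{-d} and p₁·p₂ > M^{-2d+1}. Then, almost surely conditioned on the event that both E₁ and E₂ are nonempty, the distance set D(E₁,E₂) := { |x − y| : x ∈ E₁, y ∈ E₂ } contains a nonempty open interval. -/

import Mathlib

open MeasureTheory Set ENNReal ProbabilityTheory Real

noncomputable section

/-- The alphabet indexing the `M^d` subcubes of a cube in `[0,1]^d`. -/
abbrev Alpha (d M : ℕ) : Type := Fin d → Fin M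

/-- Finite nonempty words over the alphabet; they index `M`-adic cubes. -/
abbrev Word (d M : ℕ) : Type := {w : List (Alpha d M) // w ≠ []}

/-- The sample space: `{0,1}`-labelings of all finite nonempty words. -/
abbrev PercSpace (d M : ℕ) : Type := Word d M → Bool

/-- `P` is the product measure making the labels i.i.d. Bernoulli(`p`). -/
def IsBernoulliPerc (d M : ℕ) (p : ℝ) (P : Measure (PercSpace d M)) : Prop :=
  IsProbabilityMeasure P ∧
    ∀ (S : Finset (Word d M)) (b : Word d M → Bool),
      P {ω | ∀ w ∈ S, ω w = b w} =
        ∏ w ∈ S, if b w then ENNReal.ofReal p else ENNReal.ofReal (1 - p)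

/-- A level-`w.length` cube is retained iff its word and every nonempty prefix
of its word carry label 1. -/
def Retained (d M : ℕ) (ω : PercSpace d M) (w : List (Alpha d M)) : Prop :=
  ∀ (u : List (Alpha d M)) (hu : u ≠ []), u <+: w → ω ⟨u, hu⟩ = true

/-- The `i`-th coordinate of the lower-left corner of the cube indexed by `w`. -/
def wordBase (d M : ℕ) (w : List (Alpha d M)) (i : Fin d) : ℝ :=
  ∑ j : Fin w.length, ((w.get j) i : ℝ) * (M : ℝ) ^ (-(j : ℤ) - 1)

/-- The closed `M`-adic cube of level `w.length` indexed by the word `w`. -/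
def wordCube (d M : ℕ) (w : List (Alpha d M)) : Set (EuclideanSpace ℝ (Fin d)) :=
  {x | ∀ i, wordBase d M w i ≤ x i ∧ x i ≤ wordBase d M w i + (M : ℝ) ^ (-(w.length : ℤ))}

/-- `E_n`, the union of the retained level-`n` cubes. -/
def approx (d M : ℕ) (ω : PercSpace d M) (n : ℕ) : Set (EuclideanSpace ℝ (Fin d)) :=
  ⋃ w ∈ {w : List (Alpha d M) | w.length = n ∧ Retained d M ω w}, wordCube d M w

/-- The fractal percolation set `E = ⋂_{n ≥ 1} E_n`. -/
def percLimit (d M : ℕ) (ω : PercSpace d M) : Set (EuclideanSpace ℝ (Fin d)) :=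
  ⋂ n ∈ {n : ℕ | 1 ≤ n}, approx d M ω n

/-- `P` is the joint distribution of two independent fractal percolations with
probabilities `p₁` and `p₂`. -/
def IsIndepBernoulliPair (d M : ℕ) (p₁ p₂ : ℝ)
    (P : Measure (PercSpace d M × PercSpace d M)) : Prop :=
  IsProbabilityMeasure P ∧
    ∀ (S₁ S₂ : Finset (Word d M)) (b₁ b₂ : Word d M → Bool),
      P {ω | (∀ w ∈ S₁, ω.1 w = b₁ w) ∧ (∀ w ∈ S₂, ω.2 w = b₂ w)} =
        (∏ w ∈ S₁, if b₁ w then ENNReal.ofReal p₁ else ENNReal.ofReal (1 - p₁)) *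
        (∏ w ∈ S₂, if b₂ w then ENNReal.ofReal p₂ else ENNReal.ofReal (1 - p₂))

noncomputable section

/-! ## Generic product Bernoulli measures -/

/-- Product Bernoulli measure with parameters `q`, described through all-true cylinders. -/
def IsB {ι : Type} (q : ι → ℝ) (P : Measure (ι → Bool)) : Prop :=
  IsProbabilityMeasure P ∧ ∀ S : Finset ι, P {ω | ∀ i ∈ S, ω i = true} = ∏ i ∈ S, ENNReal.ofReal (q i)

section generic
variable {ι : Type} 

/-- the true cylinders -/
def tcyl (S : Finset ι) : Set (ι → Bool) := {ω | ∀ i ∈ S, ω i = true}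

lemma measurableSet_tcyl (S : Finset ι) : MeasurableSet (tcyl S) := by
  have : tcyl S = ⋂ i ∈ S, (fun ω : ι → Bool => ω i) ⁻¹' {true} := by
    ext ω; simp [tcyl]
  rw [this]
  refine Finset.measurableSet_biInter S fun i _ => ?_
  exact measurable_pi_apply i (MeasurableSet.singleton true)

lemma generate_tcyl : (MeasurableSpace.pi : MeasurableSpace (ι → Bool)) =
    MeasurableSpace.generateFrom (range (tcyl (ι := ι))) := by
  apply le_antisymm
  · refine iSup_le fun i => ?_
    rw [← measurable_iff_comap_le]
    refine @measurable_to_bool _ (MeasurableSpace.generateFrom (range (tcyl (ι := ι)))) _ ?_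
    refine MeasurableSpace.measurableSet_generateFrom ⟨{i}, ?_⟩
    ext ω; simp [tcyl]
  · refine MeasurableSpace.generateFrom_le ?_
    rintro _ ⟨S, rfl⟩
    exact measurableSet_tcyl S

lemma isPi_tcyl : IsPiSystem (range (tcyl (ι := ι))) := by
  classical
  rintro _ ⟨S, rfl⟩ _ ⟨T, rfl⟩ _
  refine ⟨S ∪ T, ?_⟩
  ext ω
  simp only [tcyl, Finset.mem_union, mem_ofPred_eq, mem_inter_iff]
  constructor
  · intro h; exact ⟨fun i hi => h i (Or.inl hi), fun i hi => h i (Or.inr hi)⟩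
  · rintro ⟨h1, h2⟩ i (hi | hi)
    · exact h1 i hi
    · exact h2 i hi

lemma tcyl_ext {μ ν : Measure (ι → Bool)} [IsFiniteMeasure μ]
    (h : ∀ S : Finset ι, μ (tcyl S) = ν (tcyl S)) : μ = ν := by
  refine ext_of_generate_finite _ generate_tcyl isPi_tcyl ?_ ?_
  · rintro _ ⟨S, rfl⟩; exact h S
  · have := h ∅
    simpa [tcyl] using this

lemma IsB.prob {q : ι → ℝ} {P : Measure (ι → Bool)} (h : IsB q P) : IsProbabilityMeasure P := h.1

lemma IsB.tcyl {q : ι → ℝ} {P : Measure (ι → Bool)} (h : IsB q P) (S : Finset ι) :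
    P (tcyl S) = ∏ i ∈ S, ENNReal.ofReal (q i) := h.2 S

lemma DependsOn.measurable_fin {β : Type} [MeasurableSpace β] {f : (ι → Bool) → β}
    {s : Set ι} (hf : DependsOn f s) (hs : s.Finite) : Measurable f := by
  have : Nonempty β := ⟨f (fun _ => true)⟩
  obtain ⟨g, rfl⟩ := dependsOn_iff_exists_comp.1 hf
  have : Finite s := hs
  refine (measurable_of_finite g).comp ?_
  rw [measurable_pi_iff]
  intro a
  exact measurable_pi_apply (a : ι)

variable [DecidableEq ι]

lemma measurable_upd (i : ι) (b : Bool) :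
    Measurable (fun ω : ι → Bool => Function.update ω i b) := by
  rw [measurable_pi_iff]
  intro j
  by_cases hj : j = i
  · subst hj; simp
  · simp only [Function.update_of_ne hj]; exact measurable_pi_apply j

lemma resample_measure {q : ι → ℝ} {P : Measure (ι → Bool)} (h : IsB q P) (i : ι)
    (h0 : 0 ≤ q i) (h1 : q i ≤ 1) :
    P = ENNReal.ofReal (q i) • P.map (fun ω => Function.update ω i true) +
      ENNReal.ofReal (1 - q i) • P.map (fun ω => Function.update ω i false) := by
  have := h.prob
  refine tcyl_ext fun S => ?_
  simp only [Measure.add_apply, Measure.smul_apply, smul_eq_mul]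
  rw [Measure.map_apply (measurable_upd i _) (measurableSet_tcyl S),
    Measure.map_apply (measurable_upd i _) (measurableSet_tcyl S)]
  by_cases hi : i ∈ S
  · have e1 : (fun ω : ι → Bool => Function.update ω i true) ⁻¹' (tcyl S) = tcyl (S.erase i) := by
      ext ω
      simp only [tcyl, mem_preimage, mem_ofPred_eq, Finset.mem_erase]
      constructor
      · rintro hh j ⟨hj, hjS⟩
        have := hh j hjS
        rwa [Function.update_of_ne hj] at this
      · intro hh j hj
        by_cases hji : j = i
        · subst hji; simp
        · rw [Function.update_of_ne hji]; exact hh j ⟨hji, hj⟩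
    have e2 : (fun ω : ι → Bool => Function.update ω i false) ⁻¹' (tcyl S) = ∅ := by
      ext ω
      simp only [tcyl, mem_preimage, mem_ofPred_eq, mem_empty_iff_false, iff_false]
      intro hh
      have := hh i hi
      simp at this
    rw [e1, e2, h.tcyl, h.tcyl, ← Finset.mul_prod_erase S _ hi]
    simp
  · have e (b : Bool) : (fun ω : ι → Bool => Function.update ω i b) ⁻¹' (tcyl S) = tcyl S := by
      ext ω
      simp only [tcyl, mem_preimage, mem_ofPred_eq]
      refine forall₂_congr fun j hj => ?_
      rw [Function.update_of_ne (by rintro rfl; exact hi hj)]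
    rw [e, e, ← add_mul, ← ENNReal.ofReal_add h0 (by linarith)]
    simp

lemma resample {q : ι → ℝ} {P : Measure (ι → Bool)} (h : IsB q P) (i : ι)
    (h0 : 0 ≤ q i) (h1 : q i ≤ 1) (f : (ι → Bool) → ℝ≥0∞) (hf : Measurable f) :
    ∫⁻ ω, f ω ∂P = ENNReal.ofReal (q i) * ∫⁻ ω, f (Function.update ω i true) ∂P +
      ENNReal.ofReal (1 - q i) * ∫⁻ ω, f (Function.update ω i false) ∂P := by
  conv_lhs => rw [resample_measure h i h0 h1]
  rw [lintegral_add_measure, lintegral_smul_measure, lintegral_smul_measure,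
    lintegral_map hf (measurable_upd i _), lintegral_map hf (measurable_upd i _)]
  simp

lemma DependsOn.update_eq {β : Type} {f : (ι → Bool) → β} {s : Set ι}
    (hf : DependsOn f s) {i : ι} (hi : i ∉ s) (ω : ι → Bool) (b : Bool) :
    f (Function.update ω i b) = f ω :=
  hf fun j hj => Function.update_of_ne (by rintro rfl; exact hi hj) _ _

/-- Independence of finitely many coordinates from the others. -/
lemma indep_fin {q : ι → ℝ} {P : Measure (ι → Bool)} (h : IsB q P)
    (h01 : ∀ i, 0 ≤ q i ∧ q i ≤ 1) (S : Finset ι) (f g : (ι → Bool) → ℝ≥0∞)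
    (hf : DependsOn f (S : Set ι)) (hg : DependsOn g (S : Set ι)ᶜ) (hgm : Measurable g) :
    ∫⁻ ω, f ω * g ω ∂P = (∫⁻ ω, f ω ∂P) * ∫⁻ ω, g ω ∂P := by
  have := h.prob
  induction S using Finset.induction_on generalizing f with
  | empty =>
    have : f = fun _ => f (fun _ => true) := by
      funext ω
      exact hf (by simp)
    rw [this]
    simp only [lintegral_const, measure_univ, mul_one]
    exact lintegral_const_mul _ hgm
  | insert i S hi ih =>
    have hfm : Measurable f := hf.measurable_fin (Finset.finite_toSet _)
    have hg' : DependsOn g (S : Set ι)ᶜ := hg.mono (by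
      apply compl_subset_compl.2; simp)
    have hfb (b : Bool) : DependsOn (fun ω => f (Function.update ω i b)) (S : Set ι) := by
      intro x y hxy
      refine hf fun j hj => ?_
      by_cases hji : j = i
      · subst hji; simp
      · rw [Function.update_of_ne hji, Function.update_of_ne hji]
        apply hxy
        simp only [Finset.coe_insert, mem_insert_iff, hji, false_or] at hj
        exact hj
    have hgu (ω : ι → Bool) (b : Bool) : g (Function.update ω i b) = g ω :=
      hg.update_eq (by simp) ω b
    rw [resample h i (h01 i).1 (h01 i).2 (fun ω => f ω * g ω) (hfm.mul hgm), resample h i (h01 i).1 (h01 i).2 f hfm]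
    simp only [hgu]
    rw [ih _ (hfb true) hg', ih _ (hfb false) hg']
    ring

lemma indep_fin_set {q : ι → ℝ} {P : Measure (ι → Bool)} (h : IsB q P)
    (h01 : ∀ i, 0 ≤ q i ∧ q i ≤ 1) (S : Finset ι) (A B : Set (ι → Bool))
    (hA : DependsOn (fun ω => ω ∈ A) (S : Set ι)) (hB : DependsOn (fun ω => ω ∈ B) (S : Set ι)ᶜ)
    (hBm : MeasurableSet B) : P (A ∩ B) = P A * P B := by
  classical
  have hAm : MeasurableSet A := by
    have : Measurable (fun ω => ω ∈ A) := hA.measurable_fin (Finset.finite_toSet _)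
    exact measurableSet_setOfPred.2 this
  have := indep_fin h h01 S (A.indicator 1) (B.indicator 1) ?_ ?_
    (measurable_one.indicator hBm)
  · rw [lintegral_indicator_one hAm, lintegral_indicator_one hBm] at this
    rw [← this, ← lintegral_indicator_one (hAm.inter hBm)]
    congr 1
    funext ω
    by_cases h1 : ω ∈ A <;> by_cases h2 : ω ∈ B <;> simp [h1, h2]
  · intro x y hxy
    have := hA hxy
    simp only [eq_iff_iff] at this
    simp [indicator, this]
  · intro x y hxy
    have := hB hxy
    simp only [eq_iff_iff] at this
    simp [indicator, this]

/-- Conditional exponential moment inequality. -/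
lemma exp_moment {q : ι → ℝ} {P : Measure (ι → Bool)} (h : IsB q P)
    (h01 : ∀ i, 0 ≤ q i ∧ q i ≤ 1) (S : Finset ι) (D : Set ι) (hD : D.Finite)
    (hDS : ∀ i ∈ S, i ∉ D) (F : (ι → Bool) → ℝ≥0∞) (hF : DependsOn F D)
    (c κ : ι → (ι → Bool) → ℝ) (hc : ∀ i ∈ S, DependsOn (c i) D)
    (hκ : ∀ i ∈ S, DependsOn (κ i) D)
    (hineq : ∀ i ∈ S, ∀ ω, F ω ≠ 0 → 1 - q i + q i * Real.exp (c i ω) ≤ Real.exp (κ i ω)) :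
    ∫⁻ ω, F ω * ENNReal.ofReal (Real.exp (∑ i ∈ S, if ω i then c i ω else 0)) ∂P ≤
      ∫⁻ ω, F ω * ENNReal.ofReal (Real.exp (∑ i ∈ S, κ i ω)) ∂P := by
  induction S using Finset.induction_on generalizing F D with
  | empty => simp
  | insert i S hi ih =>
    have hiD : i ∉ D := hDS i (by simp)
    have hsplit (ω : ι → Bool) : F ω * ENNReal.ofReal (Real.exp (∑ j ∈ insert i S, if ω j then c j ω else 0))
        = (F ω * ENNReal.ofReal (Real.exp (if ω i then c i ω else 0))) *
          ENNReal.ofReal (Real.exp (∑ j ∈ S, if ω j then c j ω else 0)) := by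
      rw [Finset.sum_insert hi, Real.exp_add, ENNReal.ofReal_mul (Real.exp_pos _).le, mul_assoc]
    simp only [hsplit]
    have hdepD {β : Type} {f : (ι → Bool) → β} (hf : DependsOn f D) : DependsOn f (insert i D) :=
      hf.mono (subset_insert _ _)
    have hG : DependsOn (fun ω => F ω * ENNReal.ofReal (Real.exp (if ω i then c i ω else 0)))
        (insert i D) := by
      intro x y hxy
      simp only [hdepD hF hxy, hdepD (hc i (by simp)) hxy, hxy i (by simp)]
    refine (ih (insert i D) (hD.insert i) ?_ _ hG ?_ ?_ ?_).trans ?_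
    · intro j hj
      simp only [mem_insert_iff, not_or]
      exact ⟨by rintro rfl; exact hi hj, hDS j (by simp [hj])⟩
    · intro j hj; exact hdepD (hc j (by simp [hj]))
    · intro j hj; exact hdepD (hκ j (by simp [hj]))
    · intro j hj ω hω
      exact hineq j (by simp [hj]) ω (left_ne_zero_of_mul hω)
    have hK : DependsOn (fun ω => ENNReal.ofReal (Real.exp (∑ j ∈ S, κ j ω))) D := by
      intro x y hxy
      have : ∑ j ∈ S, κ j x = ∑ j ∈ S, κ j y :=
        Finset.sum_congr rfl fun j hj => hκ j (by simp [hj]) hxy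
      simp only [this]
    have hmeas : Measurable (fun ω => F ω * ENNReal.ofReal (Real.exp (if ω i then c i ω else 0)) *
        ENNReal.ofReal (Real.exp (∑ j ∈ S, κ j ω))) :=
      (hG.measurable_fin (hD.insert i)).mul (hK.measurable_fin hD)
    rw [resample h i (h01 i).1 (h01 i).2 _ hmeas]
    have hFm := hF.measurable_fin hD
    have hKm := hK.measurable_fin hD
    have hcm : Measurable (c i) := (hc i (by simp)).measurable_fin hD
    simp only [hF.update_eq hiD, (hc i (Finset.mem_insert_self i S)).update_eq hiD, Function.update_self,
      if_true, Bool.false_eq_true, if_false, Real.exp_zero, ENNReal.ofReal_one, mul_one]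
    have hK' (ω : ι → Bool) (b : Bool) : ENNReal.ofReal (Real.exp (∑ j ∈ S, κ j (Function.update ω i b))) =
      ENNReal.ofReal (Real.exp (∑ j ∈ S, κ j ω)) := hK.update_eq hiD ω b
    simp only [hK']
    rw [← lintegral_const_mul _ (by fun_prop), ← lintegral_const_mul _ (by fun_prop),
      ← lintegral_add_left (by fun_prop)]
    refine lintegral_mono fun ω => ?_
    by_cases hω : F ω = 0
    · simp [hω]
    have key : ENNReal.ofReal (q i) * ENNReal.ofReal (Real.exp (c i ω)) + ENNReal.ofReal (1 - q i)
        ≤ ENNReal.ofReal (Real.exp (κ i ω)) := by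
      rw [← ENNReal.ofReal_mul (h01 i).1, ← ENNReal.ofReal_add
        (mul_nonneg (h01 i).1 (Real.exp_pos _).le) (by linarith [(h01 i).2])]
      apply ENNReal.ofReal_le_ofReal
      linarith [hineq i (by simp) ω hω]
    rw [Finset.sum_insert hi, Real.exp_add, ENNReal.ofReal_mul (Real.exp_pos _).le]
    calc _ = (ENNReal.ofReal (q i) * ENNReal.ofReal (Real.exp (c i ω)) + ENNReal.ofReal (1 - q i)) *
          (F ω * ENNReal.ofReal (Real.exp (∑ j ∈ S, κ j ω))) := by ring
      _ ≤ ENNReal.ofReal (Real.exp (κ i ω)) * (F ω * ENNReal.ofReal (Real.exp (∑ j ∈ S, κ j ω))) := by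
        gcongr
      _ = _ := by ring

end generic
end

noncomputable section

/-! ## Words, retention, and exponential moments along one level -/

/-- Coordinates of the joint sample space. -/
abbrev Idx (d M : ℕ) : Type := Bool × Word d M
/-- Joint sample space. -/
abbrev Om (d M : ℕ) : Type := Idx d M → Bool

section words
variable {d M : ℕ}

/-- All words of length `n`. -/
def words (d M : ℕ) : ℕ → Finset (List (Alpha d M))
  | 0 => {[]}
  | n + 1 => ((words d M n) ×ˢ (Finset.univ : Finset (Alpha d M))).image (fun x => x.1 ++ [x.2])

lemma mem_words {n : ℕ} {w : List (Alpha d M)} : w ∈ words d M n ↔ w.length = n := by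
  induction n generalizing w with
  | zero => simp [words]
  | succ n ih =>
    simp only [words, Finset.mem_image, Finset.mem_product, Finset.mem_univ, and_true, Prod.exists]
    constructor
    · rintro ⟨u, a, hu, rfl⟩
      simp [ih.1 hu]
    · intro hw
      have hne : w ≠ [] := by rintro rfl; simp at hw
      refine ⟨w.dropLast, w.getLast hne, ih.2 (by simp [hw]), List.dropLast_append_getLast hne⟩

lemma append_singleton_inj {A : Type} :
    Function.Injective (fun x : List A × A => x.1 ++ [x.2]) := by
  rintro ⟨u, a⟩ ⟨v, b⟩ h
  simp only at h
  have := List.append_inj' h rfl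
  simp_all

lemma sum_words_succ (n : ℕ) (f : List (Alpha d M) → ℝ) :
    ∑ w ∈ words d M (n + 1), f w = ∑ w ∈ words d M n, ∑ a : Alpha d M, f (w ++ [a]) := by
  rw [words, Finset.sum_image (fun x _ y _ h => append_singleton_inj h), Finset.sum_product]

lemma card_words (n : ℕ) : (words d M n).card = (M ^ d) ^ n := by
  induction n with
  | zero => simp [words]
  | succ n ih =>
    rw [words, Finset.card_image_of_injective _ append_singleton_inj, Finset.card_product, ih]
    simp [pow_succ]

/-- label of a word (with the empty word labelled `true`). -/
def lab (ω : Om d M) (σ : Bool) (w : List (Alpha d M)) : Bool :=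
  if h : w ≠ [] then ω (σ, ⟨w, h⟩) else true

/-- retained, only looking at labels of level `> J`. -/
def ret (J : ℕ) (ω : Om d M) (σ : Bool) (w : List (Alpha d M)) : Prop :=
  ∀ u, u <+: w → J < u.length → lab ω σ u = true

open Classical in
/-- weighted number of retained words -/
def W (J : ℕ) (σ : Bool) (n : ℕ) (ω : Om d M) (ψ : List (Alpha d M) → ℝ) : ℝ :=
  ∑ w ∈ words d M n, if ret J ω σ w then ψ w else 0

lemma ret_succ {J : ℕ} {ω : Om d M} {σ : Bool} {w : List (Alpha d M)} {a : Alpha d M}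
    (hJ : J ≤ w.length) : ret J ω σ (w ++ [a]) ↔ ret J ω σ w ∧ ω (σ, ⟨w ++ [a], by simp⟩) = true := by
  constructor
  · intro h
    refine ⟨fun u hu => h u (hu.trans (List.prefix_append _ _)), ?_⟩
    have := h (w ++ [a]) (List.prefix_refl _) (by simp; omega)
    simpa [lab] using this
  · rintro ⟨h1, h2⟩ u hu hJu
    rw [List.prefix_concat_iff] at hu
    rcases hu with rfl | hu
    · simpa [lab] using h2
    · exact h1 u hu hJu

lemma ret_of_le {J : ℕ} {ω : Om d M} {σ : Bool} {w : List (Alpha d M)} (hJ : w.length ≤ J) :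
    ret J ω σ w := fun u hu hJu => by
  have := hu.length_le
  omega

/-- coordinates: side `σ` up to level `n`, other side up to level `N`. -/
def Dset (d M : ℕ) (σ : Bool) (n N : ℕ) : Set (Idx d M) :=
  {i | i.2.1.length ≤ if i.1 = σ then n else N}

lemma finite_len_le (n : ℕ) : {w : List (Alpha d M) | w.length ≤ n}.Finite :=
  List.finite_length_le _ n

lemma Dset_finite (σ : Bool) (n N : ℕ) : (Dset d M σ n N).Finite := by
  have h1 : {w : Word d M | w.1.length ≤ max n N}.Finite :=
    Set.Finite.preimage (Subtype.val_injective.injOn) (finite_len_le (d := d) (M := M) (max n N))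
  refine ((Set.finite_univ (α := Bool)).prod h1).subset ?_
  rintro ⟨b, w⟩ hw
  simp only [Dset, mem_ofPred_eq] at hw
  simp only [mem_prod, mem_univ, mem_ofPred_eq, true_and]
  split_ifs at hw
  · exact hw.trans (le_max_left _ _)
  · exact hw.trans (le_max_right _ _)

lemma lab_congr {x y : Om d M} {σ : Bool} {w : List (Alpha d M)} 
    (h : ∀ hw : w ≠ [], x (σ, ⟨w, hw⟩) = y (σ, ⟨w, hw⟩)) : lab x σ w = lab y σ w := by
  unfold lab
  split_ifs with h1
  · exact h h1
  · rfl

lemma ret_dep (J : ℕ) (σ : Bool) (w : List (Alpha d M)) {s : Set (Idx d M)}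
    (hs : ∀ (u : List (Alpha d M)) (hu : u ≠ []), u.length ≤ w.length → J < u.length → (σ, ⟨u, hu⟩) ∈ s) :
    DependsOn (fun ω : Om d M => ret J ω σ w) s := by
  intro x y hxy
  simp only [ret, eq_iff_iff]
  refine forall₃_congr fun u hu hJ => ?_
  rw [lab_congr (x := x) (y := y)]
  intro hne
  exact hxy _ (hs u hne hu.length_le hJ)

/-- index of a child -/
def idx (σ : Bool) (x : List (Alpha d M) × Alpha d M) : Idx d M := (σ, ⟨x.1 ++ [x.2], by simp⟩)

lemma idx_inj (σ : Bool) : Function.Injective (idx (d := d) (M := M) σ) := by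
  intro x y h
  simp only [idx, Prod.mk.injEq, true_and, Subtype.mk.injEq] at h
  exact append_singleton_inj h

open Classical in
lemma W_succ (J : ℕ) (σ : Bool) (n : ℕ) (hJ : J ≤ n) (ω : Om d M) (ψ : List (Alpha d M) → ℝ) :
    W J σ (n + 1) ω ψ = ∑ w ∈ words d M n, ∑ a : Alpha d M,
      if ω (idx σ (w, a)) then (if ret J ω σ w then ψ (w ++ [a]) else 0) else 0 := by
  rw [W, sum_words_succ]
  refine Finset.sum_congr rfl fun w hw => Finset.sum_congr rfl fun a _ => ?_
  have := ret_succ (ω := ω) (σ := σ) (a := a) (w := w) (hJ.trans (mem_words.1 hw).ge)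
  simp only [this, idx]
  by_cases h1 : ret J ω σ w <;> simp [h1]

open Classical in
lemma level_exp {q : Idx d M → ℝ} {P : Measure (Om d M)} (h : IsB q P)
    (h01 : ∀ i, 0 ≤ q i ∧ q i ≤ 1) {p : ℝ} {σ : Bool} (hq : ∀ w, q (σ, w) = p)
    {J n N : ℕ} (hJ : J ≤ n) (F : Om d M → ℝ≥0∞) (hF : DependsOn F (Dset d M σ n N))
    (ψ : Om d M → List (Alpha d M) → ℝ) (hψ : ∀ w, DependsOn (fun ω => ψ ω w) (Dset d M σ n N))
    (κ : ℝ → ℝ) 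
    (hineq : ∀ w a ω, w.length = n → F ω ≠ 0 → 
      1 - p + p * Real.exp (ψ ω (w ++ [a])) ≤ Real.exp (κ (ψ ω (w ++ [a])))) :
    ∫⁻ ω, F ω * ENNReal.ofReal (Real.exp (W J σ (n + 1) ω (ψ ω))) ∂P ≤
      ∫⁻ ω, F ω * ENNReal.ofReal (Real.exp (W J σ n ω (fun w => ∑ a, κ (ψ ω (w ++ [a]))))) ∂P := by
  let c : Idx d M → Om d M → ℝ := fun i ω =>
    if ret J ω σ i.2.1.dropLast then ψ ω i.2.1 else 0
  let k : Idx d M → Om d M → ℝ := fun i ω =>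
    if ret J ω σ i.2.1.dropLast then κ (ψ ω i.2.1) else 0
  have hretdep (w : List (Alpha d M)) (hw : w.length = n) : 
      DependsOn (fun ω : Om d M => ret J ω σ w) (Dset d M σ n N) := by
    refine ret_dep J σ w fun u hu hle _ => ?_
    simp only [Dset, mem_ofPred_eq, if_true]
    omega
  have hmem : ∀ i ∈ (words d M n ×ˢ Finset.univ).image (idx σ), i.1 = σ ∧ i.2.1.length = n + 1 := by
    intro i hi
    simp only [Finset.mem_image, Finset.mem_product, Finset.mem_univ, and_true, Prod.exists] at hi
    obtain ⟨w, a, hw, rfl⟩ := hi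
    simp [idx, mem_words.1 hw]
  have key := exp_moment h h01 ((words d M n ×ˢ Finset.univ).image (idx σ)) (Dset d M σ n N)
    (Dset_finite σ n N) ?_ F hF c k ?_ ?_ ?_
  · have e1 (ω : Om d M) : W J σ (n + 1) ω (ψ ω) =
        ∑ i ∈ (words d M n ×ˢ Finset.univ).image (idx σ), if ω i = true then c i ω else 0 := by
      rw [W_succ J σ n hJ, Finset.sum_image (fun x _ y _ h => idx_inj σ h), Finset.sum_product]
      refine Finset.sum_congr rfl fun w _ => Finset.sum_congr rfl fun a _ => ?_
      by_cases h1 : ω (idx σ (w, a)) = true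
      · rw [if_pos h1, if_pos h1]; simp [c, idx]
      · rw [if_neg h1, if_neg h1]
    have e2 (ω : Om d M) : W J σ n ω (fun w => ∑ a, κ (ψ ω (w ++ [a]))) =
        ∑ i ∈ (words d M n ×ˢ Finset.univ).image (idx σ), k i ω := by
      rw [W, Finset.sum_image (fun x _ y _ h => idx_inj σ h), Finset.sum_product]
      refine Finset.sum_congr rfl fun w hw => ?_
      by_cases h1 : ret J ω σ w <;> simp [k, idx, h1]
    simp only [e1, e2]
    exact key
  · intro i hi hiD
    obtain ⟨h1, h2⟩ := hmem i hi
    simp only [Dset, mem_ofPred_eq, h1, if_true] at hiD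
    omega
  · intro i hi x y hxy
    have h1 := hretdep i.2.1.dropLast (by simp [(hmem i hi).2]) hxy
    have h2 := hψ i.2.1 hxy
    simp only at h1 h2
    simp only [c, h1, h2]
  · intro i hi x y hxy
    have h1 := hretdep i.2.1.dropLast (by simp [(hmem i hi).2]) hxy
    have h2 := hψ i.2.1 hxy
    simp only at h1 h2
    simp only [k, h1, h2]
  · intro i hi ω hω
    simp only [Finset.mem_image, Finset.mem_product, Finset.mem_univ, and_true, Prod.exists] at hi
    obtain ⟨w, a, hw, rfl⟩ := hi
    have : q (idx σ (w, a)) = p := hq _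
    rw [this]
    by_cases h1 : ret J ω σ w
    · simpa [c, k, idx, h1] using hineq w a ω (mem_words.1 hw) hω
    · simp [c, k, idx, h1]

lemma W_add_of_additive (J : ℕ) (σ : Bool) (n : ℕ) (ω : Om d M) (ψ : List (Alpha d M) → ℝ)
    (hadd : ∀ w, w.length = n → ψ w = ∑ a, ψ (w ++ [a])) (l : ℝ) :
    W J σ n ω (fun w => ∑ a, l * ψ (w ++ [a])) = l * W J σ n ω ψ := by
  classical
  rw [W, W, Finset.mul_sum]
  refine Finset.sum_congr rfl fun w hw => ?_
  rw [hadd w (mem_words.1 hw)]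
  simp [Finset.mul_sum]

lemma W_mul (J : ℕ) (σ : Bool) (n : ℕ) (ω : Om d M) (ψ : List (Alpha d M) → ℝ) (l : ℝ) :
    W J σ n ω (fun w => l * ψ w) = l * W J σ n ω ψ := by
  classical
  rw [W, W, Finset.mul_sum]
  refine Finset.sum_congr rfl fun w hw => ?_
  simp

lemma W_mono {J : ℕ} {σ : Bool} {n : ℕ} {ω : Om d M} {ψ ψ' : List (Alpha d M) → ℝ}
    (h : ∀ w, w.length = n → ψ w ≤ ψ' w) : W J σ n ω ψ ≤ W J σ n ω ψ' := by
  classical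
  rw [W, W]
  refine Finset.sum_le_sum fun w hw => ?_
  have := h w (mem_words.1 hw)
  split_ifs
  · exact this
  · exact le_rfl

lemma W_nonneg {J : ℕ} {σ : Bool} {n : ℕ} {ω : Om d M} {ψ : List (Alpha d M) → ℝ}
    (h : ∀ w, w.length = n → 0 ≤ ψ w) : 0 ≤ W J σ n ω ψ := by
  classical
  rw [W]
  refine Finset.sum_nonneg fun w hw => ?_
  have := h w (mem_words.1 hw)
  split_ifs
  · exact this
  · exact le_rfl

lemma W_dep (J : ℕ) (σ : Bool) (n : ℕ) (ψ : Om d M → List (Alpha d M) → ℝ) {s : Set (Idx d M)}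
    (hs : ∀ (u : List (Alpha d M)) (hu : u ≠ []), u.length ≤ n → J < u.length → (σ, ⟨u, hu⟩) ∈ s)
    (hψ : ∀ w, w.length = n → DependsOn (fun ω => ψ ω w) s) : 
    DependsOn (fun ω : Om d M => W J σ n ω (ψ ω)) s := by
  classical
  intro x y hxy
  simp only [W]
  refine Finset.sum_congr rfl fun w hw => ?_
  have hw := mem_words.1 hw
  have h1 := ret_dep J σ w (s := s) (fun u hu hle hJ => hs u hu (hw ▸ hle) hJ) hxy
  have h2 := hψ w hw hxy
  simp only at h1 h2
  simp only [h1, h2]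

lemma W_total {J : ℕ} {σ : Bool} {n : ℕ} {ω : Om d M} {ψ : List (Alpha d M) → ℝ} (hn : n ≤ J)
    (hadd : ∀ w, w.length < n → ψ w = ∑ a, ψ (w ++ [a])) : W J σ n ω ψ = ψ [] := by
  classical
  have h1 : W J σ n ω ψ = ∑ w ∈ words d M n, ψ w := by
    rw [W]
    refine Finset.sum_congr rfl fun w hw => ?_
    rw [if_pos (ret_of_le ((mem_words.1 hw).le.trans hn))]
  rw [h1]
  clear h1 hn
  induction n with
  | zero => simp [words]
  | succ n ih =>
    rw [sum_words_succ, ← ih (fun w hw => hadd w (by omega))]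
    refine Finset.sum_congr rfl fun w hw => (hadd w ?_).symm
    rw [mem_words.1 hw]; omega

end words
end

noncomputable section

section chernoff
variable {d M : ℕ}

lemma exp_neg_le_quad {y : ℝ} (hy : 0 ≤ y) : Real.exp (-y) ≤ 1 - y + y ^ 2 / 2 := by
  have h := Real.quadratic_le_exp_of_nonneg hy
  rw [Real.exp_neg]
  have hpos : 0 < 1 + y + y ^ 2 / 2 := by positivity
  have h2 : (Real.exp y)⁻¹ ≤ (1 + y + y ^ 2 / 2)⁻¹ := inv_anti₀ hpos h
  refine h2.trans ?_
  rw [inv_le_iff_one_le_mul₀ hpos]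
  nlinarith [sq_nonneg (y ^ 2)]

lemma bern_exp (p x : ℝ) : 1 - p + p * Real.exp x ≤ Real.exp (p * (Real.exp x - 1)) := by
  have := Real.add_one_le_exp (p * (Real.exp x - 1))
  linarith

lemma step_lower {q : Idx d M → ℝ} {P : Measure (Om d M)} (h : IsB q P)
    (h01 : ∀ i, 0 ≤ q i ∧ q i ≤ 1) {p : ℝ} (hp : 0 ≤ p) {σ : Bool} (hq : ∀ w, q (σ, w) = p)
    {J n N : ℕ} (hJ : J ≤ n) (ψ : Om d M → List (Alpha d M) → ℝ)
    (hψ : ∀ w, DependsOn (fun ω => ψ ω w) (Dset d M σ n N))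
    (h0 : ∀ ω w, 0 ≤ ψ ω w) (hadd : ∀ ω w, w.length = n → ψ ω w = ∑ a, ψ ω (w ++ [a]))
    {X Y δ : ℝ} (hY : 0 < Y) (hδ : 0 < δ) :
    P {ω | X ≤ W J σ n ω (ψ ω) ∧ (∀ w, w.length = n + 1 → ψ ω w ≤ Y) ∧
      W J σ (n + 1) ω (ψ ω) < (1 - δ) * p * W J σ n ω (ψ ω)} ≤
      ENNReal.ofReal (Real.exp (-(δ ^ 2 * p * X / (2 * Y)))) := by
  classical
  have := h.prob
  set lam : ℝ := δ / Y with hlam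
  have hlam0 : 0 < lam := div_pos hδ hY
  set A : Set (Om d M) := {ω | X ≤ W J σ n ω (ψ ω) ∧ (∀ w, w.length = n + 1 → ψ ω w ≤ Y)} with hA
  have hWdep : DependsOn (fun ω => W J σ n ω (ψ ω)) (Dset d M σ n N) := by
    refine W_dep J σ n ψ (fun u hu hl _ => ?_) (fun w _ => hψ w)
    simp only [Dset, mem_ofPred_eq, if_true]
    exact hl
  let F : Om d M → ℝ≥0∞ := fun ω =>
    if ω ∈ A then ENNReal.ofReal (Real.exp (lam * ((1 - δ) * p * W J σ n ω (ψ ω)))) else 0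
  have hF : DependsOn F (Dset d M σ n N) := by
    intro x y hxy
    have e1 := hWdep hxy
    have e2 : ∀ w, ψ x w = ψ y w := fun w => hψ w hxy
    simp only at e1
    simp only [F, hA, mem_ofPred_eq, e1, e2]
  have key := level_exp h h01 hq hJ F hF (fun ω w => -lam * ψ ω w)
    (fun w x y hxy => by
      have e2 : ψ x w = ψ y w := hψ w hxy
      simp only [e2]) (fun x => p * (x + x ^ 2 / 2)) ?_
  · calc P {ω | X ≤ W J σ n ω (ψ ω) ∧ (∀ w, w.length = n + 1 → ψ ω w ≤ Y) ∧
          W J σ (n + 1) ω (ψ ω) < (1 - δ) * p * W J σ n ω (ψ ω)} 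
        ≤ P {ω | 1 ≤ F ω * ENNReal.ofReal (Real.exp (W J σ (n + 1) ω (fun w => -lam * ψ ω w)))} := by
          refine measure_mono ?_
          rintro ω ⟨h1, h2, h3⟩
          have hωA : ω ∈ A := ⟨h1, h2⟩
          simp only [mem_ofPred_eq, F, if_pos hωA]
          rw [← ENNReal.ofReal_mul (Real.exp_pos _).le, ← Real.exp_add, ENNReal.one_le_ofReal,
            Real.one_le_exp_iff, W_mul]
          nlinarith
      _ ≤ ∫⁻ ω, F ω * ENNReal.ofReal (Real.exp (W J σ (n + 1) ω (fun w => -lam * ψ ω w))) ∂P := by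
          have hm : Measurable (fun ω => F ω * ENNReal.ofReal (Real.exp (W J σ (n + 1) ω (fun w => -lam * ψ ω w)))) := by
            have hd : DependsOn (fun ω => F ω * ENNReal.ofReal (Real.exp (W J σ (n + 1) ω (fun w => -lam * ψ ω w))))
                (Dset d M σ (n + 1) N) := by
              have hsub : Dset d M σ n N ⊆ Dset d M σ (n + 1) N := by
                intro i hi
                simp only [Dset, mem_ofPred_eq] at hi ⊢
                split_ifs at hi ⊢ <;> omega
              have hW1 : DependsOn (fun ω => W J σ (n + 1) ω (fun w => -lam * ψ ω w)) (Dset d M σ (n + 1) N) := by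
                refine W_dep J σ (n + 1) (fun ω w => -lam * ψ ω w) (fun u hu hl _ => ?_) (fun w _ x y hxy => ?_)
                · simp only [Dset, mem_ofPred_eq, if_true]
                  exact hl
                · have e2 : ψ x w = ψ y w := (hψ w).mono hsub hxy
                  simp only [e2]
              intro x y hxy
              have e1 := hW1 hxy
              have e2 := (hF.mono hsub) hxy
              simp only at e1
              simp only [e1, e2]
            exact hd.measurable_fin (Dset_finite _ _ _)
          have := mul_meas_ge_le_lintegral (μ := P) hm 1
          simpa using this
      _ ≤ _ := key
      _ ≤ ∫⁻ ω, ENNReal.ofReal (Real.exp (-(δ ^ 2 * p * X / (2 * Y)))) ∂P := by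
          refine lintegral_mono fun ω => ?_
          by_cases hωA : ω ∈ A
          · simp only [F, if_pos hωA]
            rw [← ENNReal.ofReal_mul (Real.exp_pos _).le, ← Real.exp_add]
            refine ENNReal.ofReal_le_ofReal (Real.exp_le_exp.2 ?_)
            have hb : W J σ n ω (fun w => ∑ a, p * (-lam * ψ ω (w ++ [a]) + (-lam * ψ ω (w ++ [a])) ^ 2 / 2))
                ≤ W J σ n ω (fun w => ∑ a, (-(p * lam * (1 - δ / 2))) * ψ ω (w ++ [a])) := by
              refine W_mono fun w hw => Finset.sum_le_sum fun a _ => ?_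
              have h1 := hωA.2 (w ++ [a]) (by simp [hw])
              have h2 := h0 ω (w ++ [a])
              have h3 : lam * ψ ω (w ++ [a]) ≤ δ := by
                rw [hlam]
                calc δ / Y * ψ ω (w ++ [a]) ≤ δ / Y * Y := by gcongr
                  _ = δ := by field_simp
              have h4 : 0 ≤ lam * ψ ω (w ++ [a]) := by positivity
              have h5 : (lam * ψ ω (w ++ [a])) ^ 2 ≤ δ * (lam * ψ ω (w ++ [a])) := by nlinarith
              nlinarith
            rw [W_add_of_additive J σ n ω _ (hadd ω)] at hb
            have hX := hωA.1
            have e3 : δ ^ 2 * p * X / (2 * Y) = lam * p * δ / 2 * X := by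
              rw [hlam]; field_simp
            rw [e3]
            have h6 : lam * p * δ / 2 * X ≤ lam * p * δ / 2 * W J σ n ω (ψ ω) := by gcongr
            nlinarith
          · simp [F, hωA]
      _ = _ := by simp
  · intro w a ω hw hω
    have hp' : 0 ≤ lam * ψ ω (w ++ [a]) := mul_nonneg hlam0.le (h0 _ _)
    refine (bern_exp _ _).trans (Real.exp_le_exp.2 ?_)
    have := exp_neg_le_quad hp'
    rw [neg_mul]
    have e : (-(lam * ψ ω (w ++ [a]))) ^ 2 = (lam * ψ ω (w ++ [a])) ^ 2 := by ring
    rw [e]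
    apply mul_le_mul_of_nonneg_left _ hp
    linarith

lemma exp_up {q : Idx d M → ℝ} {P : Measure (Om d M)} (h : IsB q P)
    (h01 : ∀ i, 0 ≤ q i ∧ q i ≤ 1) {p : ℝ} (hp : 0 ≤ p) {σ : Bool} (hq : ∀ w, q (σ, w) = p)
    {J n : ℕ} (hJ : J ≤ n) (ψ : List (Alpha d M) → ℝ)
    (h0 : ∀ w, 0 ≤ ψ w) (hadd : ∀ w, w.length = n → ψ w = ∑ a, ψ (w ++ [a]))
    {lam η : ℝ} (hlam : 0 ≤ lam) (hη : η ≤ 1) (hb : ∀ w, w.length = n + 1 → lam * ψ w ≤ η) :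
    ∫⁻ ω, ENNReal.ofReal (Real.exp (lam * W J σ (n + 1) ω ψ)) ∂P ≤
      ∫⁻ ω, ENNReal.ofReal (Real.exp (lam * (p * (1 + η)) * W J σ n ω ψ)) ∂P := by
  have key := level_exp (N := 0) h h01 hq hJ (fun _ => 1) (fun _ _ _ => rfl) (fun _ w => lam * ψ w)
    (fun w x y _ => rfl) (fun x => p * (1 + η) * x) ?_
  · simp only [one_mul, W_mul] at key
    refine key.trans (le_of_eq ?_)
    refine lintegral_congr fun ω => ?_
    congr 2
    rw [← W_add_of_additive J σ n ω ψ hadd]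
    congr 1
    funext w
    refine Finset.sum_congr rfl fun a _ => by ring
  · intro w a ω hw _
    set x := lam * ψ (w ++ [a]) with hx
    have hx0 : 0 ≤ x := mul_nonneg hlam (h0 _)
    have hxη : x ≤ η := hb _ (by simp [hw])
    refine (bern_exp _ _).trans (Real.exp_le_exp.2 ?_)
    have h1 := Real.abs_exp_sub_one_sub_id_le (x := x) (by rw [abs_of_nonneg hx0]; linarith)
    have h2 := (abs_le.1 h1).2
    rw [mul_assoc]
    apply mul_le_mul_of_nonneg_left _ hp
    nlinarith

lemma one_add_inv_pow_le (N k : ℕ) (hk : k ≤ N) : (1 + 1 / (N : ℝ)) ^ k ≤ Real.exp 1 := by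
  rcases Nat.eq_zero_or_pos N with rfl | hN
  · simp only [nonpos_iff_eq_zero] at hk; subst hk; simp
  have h1 : (1 + 1 / (N : ℝ)) ≤ Real.exp (1 / N) := by
    have := Real.add_one_le_exp (1 / (N : ℝ)); linarith
  calc (1 + 1 / (N : ℝ)) ^ k ≤ (1 + 1 / (N : ℝ)) ^ N := by
        apply pow_le_pow_right₀ _ hk
        have : (0 : ℝ) ≤ 1 / N := by positivity
        linarith
    _ ≤ (Real.exp (1 / N)) ^ N := by gcongr
    _ = Real.exp 1 := by
      rw [← Real.exp_nat_mul]; congr 1; field_simp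

/-- Upper tail for the total weight of a deterministic additive weight. -/
lemma T_upper {q : Idx d M → ℝ} {P : Measure (Om d M)} (h : IsB q P)
    (h01 : ∀ i, 0 ≤ q i ∧ q i ≤ 1) {p : ℝ} (hp : 0 < p) {σ : Bool} (hq : ∀ w, q (σ, w) = p)
    {J N : ℕ} (hJ : J ≤ N) (hN : 1 ≤ N) (ψ : List (Alpha d M) → ℝ)
    (h0 : ∀ w, 0 ≤ ψ w) (hadd : ∀ w, ψ w = ∑ a, ψ (w ++ [a]))
    {B γ : ℝ} (hB : 0 ≤ B) (hpγ : p ≤ γ) (hBγ : B ≤ γ) (hp1 : p ≤ 1)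
    (hψB : ∀ w, w.length ≤ N → ψ w ≤ B ^ w.length) (K : ℝ) :
    P {ω | K * (Real.exp 1 * N * γ ^ N / p ^ J) ≤ W J σ N ω ψ} ≤ 
      ENNReal.ofReal (Real.exp (1 - K)) := by
  have := h.prob
  have hγ : 0 < γ := hp.trans_le hpγ
  have hNpos : (0 : ℝ) < N := by exact_mod_cast hN
  set lam : ℝ := p ^ J / (Real.exp 1 * N * γ ^ N) with hlam
  have hlam0 : 0 < lam := by positivity
  have hind : ∀ k, k ≤ N - J → ∫⁻ ω, ENNReal.ofReal (Real.exp (lam * W J σ N ω ψ)) ∂P ≤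
      ∫⁻ ω, ENNReal.ofReal (Real.exp (lam * (p * (1 + 1 / (N : ℝ))) ^ k * W J σ (N - k) ω ψ)) ∂P := by
    intro k
    induction k with
    | zero => intro _; simp
    | succ k ih =>
      intro hk
      refine (ih (by omega)).trans ?_
      have e : N - k = (N - (k + 1)) + 1 := by omega
      rw [e]
      refine (exp_up (η := 1 / (N : ℝ)) h h01 hp.le hq (by omega) ψ h0 (fun w _ => hadd w) (by positivity) ?_ ?_).trans ?_
      · rw [div_le_one hNpos]; exact_mod_cast hN
      · intro w hw
        have hw' : w.length = N - k := by omega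
        have hB1 := hψB w (by omega)
        rw [hw'] at hB1
        have h2 := one_add_inv_pow_le N k (by omega)
        have h3 : p ^ k * B ^ (N - k) ≤ γ ^ N := by
          calc p ^ k * B ^ (N - k) ≤ γ ^ k * γ ^ (N - k) := by gcongr
            _ = γ ^ N := by rw [← pow_add]; congr 1; omega
        have h4 : p ^ J ≤ 1 := pow_le_one₀ hp.le hp1
        calc lam * (p * (1 + 1 / (N : ℝ))) ^ k * ψ w 
            ≤ lam * (p * (1 + 1 / (N : ℝ))) ^ k * B ^ (N - k) := by gcongr
          _ = lam * ((1 + 1 / (N : ℝ)) ^ k) * (p ^ k * B ^ (N - k)) := by rw [mul_pow]; ring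
          _ ≤ lam * Real.exp 1 * γ ^ N := by gcongr
          _ = p ^ J / N := by rw [hlam]; field_simp
          _ ≤ 1 / N := by gcongr
      · refine le_of_eq (lintegral_congr fun ω => ?_)
        congr 3
        ring
  have hfin := hind (N - J) le_rfl
  have e : N - (N - J) = J := by omega
  rw [e] at hfin
  have hWJ (ω : Om d M) : W J σ J ω ψ = ψ [] := W_total le_rfl (fun w _ => hadd w)
  simp only [hWJ, lintegral_const, measure_univ, mul_one] at hfin
  have hψ1 : ψ [] ≤ 1 := by simpa using hψB [] (by simp)
  have hbd : lam * (p * (1 + 1 / (N : ℝ))) ^ (N - J) * ψ [] ≤ 1 := by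
    have h2 := one_add_inv_pow_le N (N - J) (by omega)
    have h3 : p ^ J * p ^ (N - J) ≤ γ ^ N := by
      rw [← pow_add]
      have : J + (N - J) = N := by omega
      rw [this]; gcongr
    calc lam * (p * (1 + 1 / (N : ℝ))) ^ (N - J) * ψ [] 
        ≤ lam * (p * (1 + 1 / (N : ℝ))) ^ (N - J) * 1 := by gcongr
      _ = (1 + 1 / (N : ℝ)) ^ (N - J) * (p ^ J * p ^ (N - J)) / (Real.exp 1 * N * γ ^ N) := by
        rw [mul_pow, hlam]; ring
      _ ≤ Real.exp 1 * γ ^ N / (Real.exp 1 * N * γ ^ N) := by gcongr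
      _ = 1 / N := by field_simp
      _ ≤ 1 := by rw [div_le_one hNpos]; exact_mod_cast hN
  have hfin' : ∫⁻ ω, ENNReal.ofReal (Real.exp (lam * W J σ N ω ψ)) ∂P ≤ ENNReal.ofReal (Real.exp 1) :=
    hfin.trans (ENNReal.ofReal_le_ofReal (Real.exp_le_exp.2 hbd))
  have hm : Measurable (fun ω => ENNReal.ofReal (Real.exp (lam * W J σ N ω ψ))) := by
    have hd : DependsOn (fun ω => W J σ N ω ψ) (Dset d M σ N 0) := by
      refine W_dep J σ N (fun _ => ψ) (fun u hu hl _ => ?_) (fun w _ x y hxy => rfl)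
      simp only [Dset, mem_ofPred_eq, if_true]
      exact hl
    have := hd.measurable_fin (Dset_finite _ _ _)
    fun_prop
  calc P {ω | K * (Real.exp 1 * N * γ ^ N / p ^ J) ≤ W J σ N ω ψ}
      ≤ P {ω | ENNReal.ofReal (Real.exp K) ≤ ENNReal.ofReal (Real.exp (lam * W J σ N ω ψ))} := by
        refine measure_mono fun ω hω => ?_
        simp only [mem_ofPred_eq] at hω ⊢
        refine ENNReal.ofReal_le_ofReal (Real.exp_le_exp.2 ?_)
        have : K = lam * (K * (Real.exp 1 * N * γ ^ N / p ^ J)) := by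
          rw [hlam]; field_simp
        rw [this]
        gcongr
    _ ≤ (∫⁻ ω, ENNReal.ofReal (Real.exp (lam * W J σ N ω ψ)) ∂P) / ENNReal.ofReal (Real.exp K) :=
        meas_ge_le_lintegral_div hm.aemeasurable (by simp [Real.exp_pos]) (by simp)
    _ ≤ ENNReal.ofReal (Real.exp 1) / ENNReal.ofReal (Real.exp K) := by gcongr
    _ = _ := by
      rw [← ENNReal.ofReal_div_of_pos (Real.exp_pos _), ← Real.exp_sub]

end chernoff
end

noncomputable section

/-! ## Geometry: the weight `φ` -/

section geom
variable {d M : ℕ}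

lemma wordBase_nil (i : Fin d) : wordBase d M [] i = 0 := by
  simp [wordBase]

lemma wordBase_cons (a : Alpha d M) (w : List (Alpha d M)) (i : Fin d) (hM : 2 ≤ M) :
    wordBase d M (a :: w) i = (a i : ℝ) * (M : ℝ)⁻¹ + (M : ℝ)⁻¹ * wordBase d M w i := by
  have hM0 : (M : ℝ) ≠ 0 := by positivity
  unfold wordBase
  rw [Finset.mul_sum]
  erw [Fin.sum_univ_succ]
  congr 1
  · simp
    left; rfl
  · refine Finset.sum_congr rfl fun j _ => ?_
    simp only [List.get_eq_getElem, Fin.val_succ, List.getElem_cons_succ]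
    rw [mul_left_comm, ← zpow_neg_one (M : ℝ), ← zpow_add₀ hM0]
    congr 2
    push_cast
    ring

lemma wordBase_append (u w : List (Alpha d M)) (i : Fin d) (hM : 2 ≤ M) :
    wordBase d M (u ++ w) i = wordBase d M u i + ((M : ℝ)⁻¹) ^ u.length * wordBase d M w i := by
  induction u with
  | nil => simp [wordBase_nil]
  | cons a u ih =>
    rw [List.cons_append, wordBase_cons _ _ _ hM, wordBase_cons _ _ _ hM, ih, List.length_cons, pow_succ]
    ring

lemma wordBase_snoc (u : List (Alpha d M)) (a : Alpha d M) (i : Fin d) (hM : 2 ≤ M) :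
    wordBase d M (u ++ [a]) i = wordBase d M u i + (a i : ℝ) * ((M : ℝ)⁻¹) ^ (u.length + 1) := by
  rw [wordBase_append _ _ _ hM, wordBase_cons _ _ _ hM, wordBase_nil, pow_succ]
  ring

/-- half-open side -/
def hside (M : ℕ) (w : List (Alpha d M)) (l : Fin d) : Set ℝ :=
  Ico (wordBase d M w l) (wordBase d M w l + ((M : ℝ)⁻¹) ^ w.length)

/-- half-open cube -/
def hcube (w : List (Alpha d M)) : Set (Fin d → ℝ) := {z | ∀ l, z l ∈ hside M w l}

lemma measurableSet_hcube (w : List (Alpha d M)) : MeasurableSet (hcube w) := by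
  unfold hcube
  simp only [ofPred_forall]
  refine MeasurableSet.iInter fun l => ?_
  exact measurable_pi_apply l measurableSet_Ico

lemma hcube_split (hM : 2 ≤ M) (w : List (Alpha d M)) : hcube w = ⋃ a : Alpha d M, hcube (w ++ [a]) := by
  have hM0 : (0 : ℝ) < M := by positivity
  have hpos : (0 : ℝ) < ((M : ℝ)⁻¹) ^ (w.length + 1) := by positivity
  have hmul : ((M : ℝ)⁻¹) ^ w.length = M * ((M : ℝ)⁻¹) ^ (w.length + 1) := by
    rw [pow_succ]; field_simp
  ext z
  simp only [hcube, hside, mem_iUnion, mem_ofPred_eq, mem_Ico, List.length_append, List.length_singleton, wordBase_snoc _ _ _ hM]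
  set η := ((M : ℝ)⁻¹) ^ (w.length + 1)
  rw [hmul]
  constructor
  · intro h
    have h1 : ∀ l, ∃ k : Fin M, wordBase d M w l + k * η ≤ z l ∧ z l < wordBase d M w l + k * η + η := by
      intro l
      have h0 : 0 ≤ (z l - wordBase d M w l) / η := div_nonneg (by linarith [(h l).1]) hpos.le
      have hlt : ⌊(z l - wordBase d M w l) / η⌋₊ < M := by
        rw [Nat.floor_lt h0, div_lt_iff₀ hpos]
        linarith [(h l).2]
      refine ⟨⟨_, hlt⟩, ?_, ?_⟩
      · have := Nat.floor_le h0
        rw [le_div_iff₀ hpos] at this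
        simp only
        linarith
      · have := Nat.lt_floor_add_one ((z l - wordBase d M w l) / η)
        rw [div_lt_iff₀ hpos] at this
        simp only
        linarith
    choose k hk using h1
    exact ⟨k, hk⟩
  · rintro ⟨a, ha⟩ l
    have h1 := (ha l).1
    have h2 := (ha l).2
    have h3 : ((a l : ℕ) : ℝ) + 1 ≤ M := by exact_mod_cast (a l).2
    have h4 : (0 : ℝ) ≤ ((a l : ℕ) : ℝ) := by positivity
    constructor
    · nlinarith
    · nlinarith

lemma hcube_disj (hM : 2 ≤ M) (w : List (Alpha d M)) : 
    Pairwise (fun a b : Alpha d M => Disjoint (hcube (w ++ [a])) (hcube (w ++ [b]))) := by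
  intro a b hab
  rw [Set.disjoint_left]
  intro z ha hb
  apply hab
  have hpos : (0 : ℝ) < ((M : ℝ)⁻¹) ^ (w.length + 1) := by positivity
  funext l
  have ha := ha l
  have hb := hb l
  simp only [hside, mem_Ico, List.length_append, List.length_singleton, wordBase_snoc _ _ _ hM] at ha hb
  set η := ((M : ℝ)⁻¹) ^ (w.length + 1)
  have h1 : ((a l : ℕ) : ℝ) < (b l : ℕ) + 1 := by
    by_contra h
    push Not at h
    nlinarith
  have h2 : ((b l : ℕ) : ℝ) < (a l : ℕ) + 1 := by
    by_contra h
    push Not at h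
    nlinarith
  have h1 : (a l : ℕ) < (b l : ℕ) + 1 := by exact_mod_cast h1
  have h2 : (b l : ℕ) < (a l : ℕ) + 1 := by exact_mod_cast h2
  ext
  omega

lemma hcube_subset (hM : 2 ≤ M) (w : List (Alpha d M)) : hcube w ⊆ hcube ([] : List (Alpha d M)) := by
  induction w using List.reverseRecOn with
  | nil => exact subset_rfl
  | append_singleton w a ih =>
    refine subset_trans ?_ ih
    rw [hcube_split hM w]
    exact subset_iUnion (fun a => hcube (w ++ [a])) a

/-- ambient space of the weights -/
abbrev ZZ (d : ℕ) : Type := (Fin d → ℝ) × (Fin d → ℝ)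

/-- region defining the weight -/
def reg (i : Fin d) (g : ZZ d → ℝ) (u v : List (Alpha d M)) : Set (ℝ × ZZ d) :=
  {z | z.2.1 i ∈ Ico (0:ℝ) 1 ∧ z.2.2 i ∈ Ico (0:ℝ) 1 ∧
    Function.update z.2.1 i (z.1 + g z.2) ∈ hcube u ∧ Function.update z.2.2 i z.1 ∈ hcube v}

/-- weight -/
def phi (i : Fin d) (g : ZZ d → ℝ) (u v : List (Alpha d M)) : ℝ := (volume (reg i g u v)).toReal

lemma meas_f1 (i : Fin d) {g : ZZ d → ℝ} (hg : Measurable g) :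
    Measurable (fun z : ℝ × ZZ d => Function.update z.2.1 i (z.1 + g z.2)) := by
  rw [measurable_pi_iff]
  intro l
  by_cases h : l = i
  · subst h; simp only [Function.update_self]; fun_prop
  · simp only [Function.update_of_ne h]; fun_prop

lemma meas_f2 (i : Fin d) :
    Measurable (fun z : ℝ × ZZ d => Function.update z.2.2 i z.1) := by
  rw [measurable_pi_iff]
  intro l
  by_cases h : l = i
  · subst h; simp only [Function.update_self]; fun_prop
  · simp only [Function.update_of_ne h]; fun_prop

lemma measurableSet_reg (i : Fin d) {g : ZZ d → ℝ} (hg : Measurable g) (u v : List (Alpha d M)) :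
    MeasurableSet (reg i g u v) := by
  unfold reg
  have h1 : Measurable (fun z : ℝ × ZZ d => z.2.1 i) := by fun_prop
  have h2 : Measurable (fun z : ℝ × ZZ d => z.2.2 i) := by fun_prop
  exact (h1 measurableSet_Ico).inter ((h2 measurableSet_Ico).inter
    ((meas_f1 i hg (measurableSet_hcube u)).inter (meas_f2 i (measurableSet_hcube v))))

/-- side box with dummy coordinate -/
def sbox (i : Fin d) (w : List (Alpha d M)) : Set (Fin d → ℝ) :=
  Set.pi univ (fun l => if l = i then Ico (0:ℝ) 1 else hside M w l)

lemma volume_sbox (i : Fin d) (w : List (Alpha d M)) :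
    volume (sbox i w) = ENNReal.ofReal ((((M : ℝ)⁻¹) ^ (d - 1)) ^ w.length) := by
  unfold sbox
  rw [volume_pi_pi]
  have : ∀ l, volume (if l = i then Ico (0:ℝ) 1 else hside M w l) 
      = if l = i then 1 else ENNReal.ofReal (((M : ℝ)⁻¹) ^ w.length) := by
    intro l
    split_ifs
    · simp
    · simp [hside]
  simp only [this]
  rw [Finset.prod_ite]
  simp only [Finset.prod_const_one, one_mul, Finset.prod_const]
  rw [Finset.filter_ne', Finset.card_erase_of_mem (Finset.mem_univ _), Finset.card_univ, Fintype.card_fin,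
    ← ENNReal.ofReal_pow (by positivity), ← pow_mul, ← pow_mul, mul_comm]

lemma measurableSet_sbox (i : Fin d) (w : List (Alpha d M)) : MeasurableSet (sbox i w) := by
  refine MeasurableSet.univ_pi fun l => ?_
  split_ifs
  · exact measurableSet_Ico
  · exact measurableSet_Ico

lemma mem_sbox_of {i : Fin d} {w : List (Alpha d M)} {x : Fin d → ℝ} {t : ℝ} 
    (h : x i ∈ Ico (0:ℝ) 1) (h2 : Function.update x i t ∈ hcube w) : x ∈ sbox i w := by
  intro l _
  by_cases hl : l = i
  · subst hl; simpa using h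
  · have := h2 l
    simpa [hl] using this

lemma vol_le_of_fiber {i : Fin d} {u v : List (Alpha d M)} {A : Set (ℝ × ZZ d)} (hA : MeasurableSet A)
    (h1 : ∀ z ∈ A, z.2.1 ∈ sbox i u ∧ z.2.2 ∈ sbox i v) {c : ℝ≥0∞} 
    (h2 : ∀ z : ZZ d, volume {t | (t, z) ∈ A} ≤ c) :
    volume A ≤ c * (volume (sbox i u) * volume (sbox i v)) := by
  rw [Measure.volume_eq_prod, Measure.prod_apply_symm hA]
  calc ∫⁻ z : ZZ d, volume ((fun x => (x, z)) ⁻¹' A) 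
      ≤ ∫⁻ z : ZZ d, (sbox i u ×ˢ sbox i v).indicator (fun _ => c) z := by
        refine lintegral_mono fun z => ?_
        by_cases hz : z ∈ sbox i u ×ˢ sbox i v
        · rw [indicator_of_mem hz]; exact h2 z
        · have : (fun x : ℝ => (x, z)) ⁻¹' A = ∅ := by
            ext t
            simp only [mem_preimage, mem_empty_iff_false, iff_false]
            intro ht
            exact hz (h1 _ ht)
          rw [this]; simp
    _ = c * (volume (sbox i u) * volume (sbox i v)) := by
        rw [lintegral_indicator ((measurableSet_sbox i u).prod (measurableSet_sbox i v)), setLIntegral_const,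
          Measure.volume_eq_prod, Measure.prod_prod]

lemma reg_sbox {i : Fin d} {g : ZZ d → ℝ} {u v : List (Alpha d M)} :
    ∀ z ∈ reg i g u v, z.2.1 ∈ sbox i u ∧ z.2.2 ∈ sbox i v := by
  rintro z ⟨h1, h2, h3, h4⟩
  exact ⟨mem_sbox_of h1 h3, mem_sbox_of h2 h4⟩

lemma vol_reg_le (i : Fin d) {g : ZZ d → ℝ} (hg : Measurable g) (u v : List (Alpha d M)) :
    volume (reg i g u v) ≤ ENNReal.ofReal (min (((M : ℝ)⁻¹) ^ u.length) (((M : ℝ)⁻¹) ^ v.length) *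
      ((((M : ℝ)⁻¹) ^ (d - 1)) ^ u.length * (((M : ℝ)⁻¹) ^ (d - 1)) ^ v.length)) := by
  refine (vol_le_of_fiber (c := ENNReal.ofReal (min (((M : ℝ)⁻¹) ^ u.length) (((M : ℝ)⁻¹) ^ v.length)))
    (measurableSet_reg i hg u v) reg_sbox ?_).trans ?_
  · intro z
    rw [ENNReal.ofReal_min]
    refine le_min ?_ ?_
    · refine (measure_mono (t := (fun t => t + g z) ⁻¹' hside M u i) ?_).trans ?_
      · rintro t ⟨_, _, h, _⟩
        have := h i
        simpa using this
      · rw [measure_preimage_add_right]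
        simp [hside]
    · refine (measure_mono (t := hside M v i) ?_).trans ?_
      · rintro t ⟨_, _, _, h⟩
        have := h i
        simpa using this
      · simp [hside]
  · rw [volume_sbox, volume_sbox, ENNReal.ofReal_mul (by positivity), ENNReal.ofReal_mul (by positivity)]

lemma phi_le (i : Fin d) {g : ZZ d → ℝ} (hg : Measurable g) (u v : List (Alpha d M)) :
    phi i g u v ≤ min (((M : ℝ)⁻¹) ^ u.length) (((M : ℝ)⁻¹) ^ v.length) *
      ((((M : ℝ)⁻¹) ^ (d - 1)) ^ u.length * (((M : ℝ)⁻¹) ^ (d - 1)) ^ v.length) :=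
  ENNReal.toReal_le_of_le_ofReal (by positivity) (vol_reg_le i hg u v)

lemma vol_reg_ne_top (i : Fin d) {g : ZZ d → ℝ} (hg : Measurable g) (u v : List (Alpha d M)) :
    volume (reg i g u v) ≠ ∞ := ((vol_reg_le i hg u v).trans_lt ENNReal.ofReal_lt_top).ne

lemma phi_nonneg (i : Fin d) (g : ZZ d → ℝ) (u v : List (Alpha d M)) : 0 ≤ phi i g u v :=
  ENNReal.toReal_nonneg

lemma phi_add_left (hM : 2 ≤ M) (i : Fin d) {g : ZZ d → ℝ} (hg : Measurable g) (u v : List (Alpha d M)) :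
    phi i g u v = ∑ a, phi i g (u ++ [a]) v := by
  unfold phi
  rw [← ENNReal.toReal_sum (fun a _ => vol_reg_ne_top i hg _ _)]
  congr 1
  have : reg i g u v = ⋃ a, reg i g (u ++ [a]) v := by
    ext z
    simp only [reg, hcube_split hM u, mem_iUnion, mem_ofPred_eq]
    tauto
  rw [this, measure_iUnion _ (fun a => measurableSet_reg i hg _ _), tsum_fintype]
  intro a b hab
  have := hcube_disj hM u hab
  rw [Function.onFun, Set.disjoint_left] 
  rintro z ⟨_, _, h, _⟩ ⟨_, _, h', _⟩
  exact (Set.disjoint_left.1 this) h h'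

lemma phi_add_right (hM : 2 ≤ M) (i : Fin d) {g : ZZ d → ℝ} (hg : Measurable g) (u v : List (Alpha d M)) :
    phi i g u v = ∑ a, phi i g u (v ++ [a]) := by
  unfold phi
  rw [← ENNReal.toReal_sum (fun a _ => vol_reg_ne_top i hg _ _)]
  congr 1
  have : reg i g u v = ⋃ a, reg i g u (v ++ [a]) := by
    ext z
    simp only [reg, hcube_split hM v, mem_iUnion, mem_ofPred_eq]
    tauto
  rw [this, measure_iUnion _ (fun a => measurableSet_reg i hg _ _), tsum_fintype]
  intro a b hab
  have := hcube_disj hM v hab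
  rw [Function.onFun, Set.disjoint_left] 
  rintro z ⟨_, _, _, h⟩ ⟨_, _, _, h'⟩
  exact (Set.disjoint_left.1 this) h h'

lemma phi_lip (hM : 2 ≤ M) (i : Fin d) {g g' : ZZ d → ℝ} (hg : Measurable g) (hg' : Measurable g') {ε : ℝ} 
    (hε : ∀ z, |g z - g' z| ≤ ε) (u v : List (Alpha d M)) :
    phi i g u v ≤ phi i g' u v + 2 * ε := by
  have hε0 : 0 ≤ ε := (abs_nonneg _).trans (hε 0)
  have hM1 : (M : ℝ)⁻¹ ≤ 1 := inv_le_one_of_one_le₀ (by exact_mod_cast (by omega : 1 ≤ M))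
  have hs (w : List (Alpha d M)) : volume (sbox i w) ≤ 1 := by
    rw [volume_sbox, ← ENNReal.ofReal_one]
    exact ENNReal.ofReal_le_ofReal (pow_le_one₀ (by positivity) (pow_le_one₀ (by positivity) hM1))
  have key : volume (reg i g u v \ reg i g' u v) ≤ ENNReal.ofReal (2 * ε) := by
    refine (vol_le_of_fiber (c := ENNReal.ofReal (2 * ε)) (i := i) (u := u) (v := v)
      ((measurableSet_reg i hg u v).diff (measurableSet_reg i hg' u v)) (fun z hz => reg_sbox z hz.1) ?_).trans ?_
    · intro z
      set b := wordBase d M u i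
      set c := wordBase d M u i + ((M : ℝ)⁻¹) ^ u.length
      have hz := abs_le.1 (hε z)
      refine (measure_mono (t := Ico (b - g z) (b - g' z) ∪ Ico (c - g' z) (c - g z)) ?_).trans ?_
      · rintro t ⟨⟨h1, h2, h3, h4⟩, h5⟩
        have h6 : t + g z ∈ Ico b c := by
          have := h3 i
          rw [Function.update_self] at this
          exact this
        have h7 : t + g' z ∉ Ico b c := by
          intro h7
          apply h5
          refine ⟨h1, h2, ?_, h4⟩
          intro l
          by_cases hl : l = i
          · subst hl; rw [Function.update_self]; exact h7
          · simpa [hl] using h3 l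
        simp only [mem_Ico, not_and, not_lt, mem_union] at *
        by_cases h8 : b ≤ t + g' z
        · right; have := h7 h8; constructor <;> linarith
        · left; constructor <;> linarith
      · refine (measure_union_le _ _).trans ?_
        rw [Real.volume_Ico, Real.volume_Ico, two_mul, ENNReal.ofReal_add hε0 hε0]
        refine add_le_add (ENNReal.ofReal_le_ofReal ?_) (ENNReal.ofReal_le_ofReal ?_) <;> linarith
    · calc _ ≤ ENNReal.ofReal (2 * ε) * (1 * 1) := by gcongr <;> exact hs _
        _ = _ := by simp
  have h1 : volume (reg i g u v) ≤ volume (reg i g' u v) + ENNReal.ofReal (2 * ε) := by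
    calc volume (reg i g u v) ≤ volume (reg i g' u v ∪ (reg i g u v \ reg i g' u v)) :=
          measure_mono (by rw [union_sdiff_self]; exact subset_union_right)
      _ ≤ _ := (measure_union_le _ _).trans (by gcongr)
  unfold phi
  calc _ ≤ (volume (reg i g' u v) + ENNReal.ofReal (2 * ε)).toReal := 
        ENNReal.toReal_mono (ENNReal.add_ne_top.2 ⟨vol_reg_ne_top i hg' u v, ENNReal.ofReal_ne_top⟩) h1
    _ = _ := by
      rw [ENNReal.toReal_add (vol_reg_ne_top i hg' u v) ENNReal.ofReal_ne_top, ENNReal.toReal_ofReal (by positivity)]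

end geom
end

noncomputable section

section geom2
variable {d M : ℕ}

/-- sum of squares of the off-`i` coordinates -/
def offs (i : Fin d) (Δ : Fin d → ℝ) (z : ZZ d) : ℝ :=
  ∑ l ∈ Finset.univ.erase i, (Δ l + z.1 l - z.2 l) ^ 2

/-- root height -/
def rootS (i : Fin d) (Δ : Fin d → ℝ) (r : ℝ) (z : ZZ d) : ℝ :=
  √(max (r ^ 2 - offs i Δ z) (Δ i ^ 2 / 4))

/-- sign of `Δ i` -/
def sgn (t : ℝ) : ℝ := if 0 ≤ t then 1 else -1

lemma sgn_mul_abs (t : ℝ) : sgn t * |t| = t := by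
  unfold sgn; split_ifs with h
  · rw [abs_of_nonneg h]; ring
  · rw [abs_of_neg (not_le.1 h)]; ring

lemma abs_sgn (t : ℝ) : |sgn t| = 1 := by
  unfold sgn; split_ifs <;> simp

/-- the shift function -/
def gg (i : Fin d) (Δ : Fin d → ℝ) (r : ℝ) (z : ZZ d) : ℝ := sgn (Δ i) * (rootS i Δ r z - |Δ i|)

lemma measurable_gg (i : Fin d) (Δ : Fin d → ℝ) (r : ℝ) : Measurable (gg i Δ r) := by
  unfold gg rootS offs
  fun_prop

lemma gg_lip (i : Fin d) (Δ : Fin d → ℝ) (h3 : 3 ≤ |Δ i|) {r r' : ℝ} (hr : 0 ≤ r) (hr' : 0 ≤ r')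
    (hr1 : r ≤ 2 * d * |Δ i|) (hr1' : r' ≤ 2 * d * |Δ i|) (z : ZZ d) :
    |gg i Δ r z - gg i Δ r' z| ≤ 4 * d * |r - r'| := by
  have h1 : gg i Δ r z - gg i Δ r' z = sgn (Δ i) * (rootS i Δ r z - rootS i Δ r' z) := by
    unfold gg; ring
  rw [h1, abs_mul, abs_sgn, one_mul]
  set e := |Δ i|
  have he : Δ i ^ 2 = e ^ 2 := (sq_abs _).symm
  have hs (r : ℝ) : e / 2 ≤ rootS i Δ r z := by
    refine Real.le_sqrt_of_sq_le ?_
    refine le_trans ?_ (le_max_right _ _)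
    rw [he]; nlinarith
  have hsq (r : ℝ) : rootS i Δ r z ^ 2 = max (r ^ 2 - offs i Δ z) (Δ i ^ 2 / 4) := 
    Real.sq_sqrt (le_trans (by positivity) (le_max_right _ _))
  have h2 : |rootS i Δ r z ^ 2 - rootS i Δ r' z ^ 2| ≤ |r ^ 2 - r' ^ 2| := by
    rw [hsq, hsq]
    refine (abs_max_sub_max_le_abs _ _ _).trans ?_
    rw [sub_sub_sub_cancel_right]
  have h3' : |rootS i Δ r z ^ 2 - rootS i Δ r' z ^ 2| = 
      |rootS i Δ r z - rootS i Δ r' z| * (rootS i Δ r z + rootS i Δ r' z) := by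
    rw [sq_sub_sq, abs_mul, mul_comm, abs_of_nonneg (a := _ + _)]
    have := hs r; have := hs r'; linarith
  have h4 : |r ^ 2 - r' ^ 2| = |r - r'| * (r + r') := by
    rw [sq_sub_sq, abs_mul, mul_comm, abs_of_nonneg (a := _ + _)]
    linarith
  rw [h3', h4] at h2
  have h5 := hs r
  have h6 := hs r'
  have h7 : |rootS i Δ r z - rootS i Δ r' z| * e ≤ (4 * d * |r - r'|) * e := by
    have := abs_nonneg (r - r')
    have := abs_nonneg (rootS i Δ r z - rootS i Δ r' z)
    nlinarith
  exact le_of_mul_le_mul_right h7 (by linarith)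

/-- word cubes at relative displacement `Δ` realise squared distance `r ^ 2`. -/
def Touch (Δ : Fin d → ℝ) (r : ℝ) (u v : List (Alpha d M)) : Prop :=
  ∃ x ∈ wordCube d M u, ∃ y ∈ wordCube d M v, ∑ l, (Δ l + x l - y l) ^ 2 = r ^ 2

lemma hcube_wordCube {w : List (Alpha d M)} {x : Fin d → ℝ} (h : x ∈ hcube w) : 
    WithLp.toLp 2 x ∈ wordCube d M w := by
  intro l
  have := h l
  simp only [hside, mem_Ico] at this
  simp only [zpow_neg, zpow_natCast]
  rw [inv_pow] at this
  exact ⟨this.1, this.2.le⟩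

lemma touch_of_phi (hM : 2 ≤ M) (i : Fin d) (Δ : Fin d → ℝ) (h3 : 3 ≤ |Δ i|) {r : ℝ}
    {u v : List (Alpha d M)} (h : 0 < phi i (gg i Δ r) u v) : Touch Δ r u v := by
  have hne : (reg i (gg i Δ r) u v).Nonempty := by
    by_contra hne
    rw [not_nonempty_iff_eq_empty] at hne
    simp [phi, hne] at h
  obtain ⟨⟨t, x, y⟩, h1, h2, h4, h5⟩ := hne
  simp only at h1 h2 h4 h5
  refine ⟨_, hcube_wordCube h4, _, hcube_wordCube h5, ?_⟩
  rw [← Finset.add_sum_erase _ _ (Finset.mem_univ i)]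
  simp only [Function.update_self]
  have hoff : ∑ l ∈ Finset.univ.erase i, (Δ l + Function.update x i (t + gg i Δ r (x, y)) l 
      - Function.update y i t l) ^ 2 = offs i Δ (x, y) := by
    refine Finset.sum_congr rfl fun l hl => ?_
    have := Finset.ne_of_mem_erase hl
    simp [this]
  rw [hoff]
  have h6 := hcube_subset hM _ h4 i
  have h7 := hcube_subset hM _ h5 i
  simp only [hside, mem_Ico, wordBase_nil, List.length_nil, pow_zero, Function.update_self] at h6 h7
  have hg : |gg i Δ r (x, y)| < 1 := abs_lt.2 ⟨by linarith, by linarith⟩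
  have hg2 : gg i Δ r (x, y) = sgn (Δ i) * (rootS i Δ r (x, y) - |Δ i|) := rfl
  have e1 : Δ i + (t + gg i Δ r (x, y)) - t = sgn (Δ i) * rootS i Δ r (x, y) := by
    rw [hg2]
    have := sgn_mul_abs (Δ i)
    linarith
  rw [e1, mul_pow, ← sq_abs (sgn _), abs_sgn, one_pow, one_mul]
  rw [hg2, abs_mul, abs_sgn, one_mul] at hg
  have hs : |Δ i| / 2 < rootS i Δ r (x, y) := by
    have := (abs_lt.1 hg).1
    linarith
  have hsq : rootS i Δ r (x, y) ^ 2 = max (r ^ 2 - offs i Δ (x, y)) (Δ i ^ 2 / 4) := 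
    Real.sq_sqrt (le_trans (by positivity) (le_max_right _ _))
  rcases max_cases (r ^ 2 - offs i Δ (x, y)) (Δ i ^ 2 / 4) with hm | hm
  · rw [hsq, hm.1]; ring
  · exfalso
    rw [hm.1, ← sq_abs (Δ i)] at hsq
    nlinarith

lemma base_lower (hd : 1 ≤ d) (i : Fin d) (Δ : Fin d → ℝ) (h3 : 3 ≤ |Δ i|) (hmax : ∀ l, |Δ l| ≤ |Δ i|) {r : ℝ}
    (hr : |r - √(∑ l, Δ l ^ 2)| ≤ 1 / (24 * d)) :
    (1 / (24 * d) : ℝ) ^ (2 * d) / 4 ≤ phi (M := M) i (gg i Δ r) [] [] := by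
  have hd' : (1 : ℝ) ≤ d := by exact_mod_cast hd
  set κ : ℝ := 1 / (24 * d) with hκ
  have hκ0 : 0 < κ := by positivity
  have hκd : κ * d = 1 / 24 := by rw [hκ]; field_simp
  have hκ1 : κ ≤ 1 / 24 := by nlinarith
  set e := |Δ i|
  set rc := √(∑ l, Δ l ^ 2)
  have hrc0 : 0 ≤ rc := Real.sqrt_nonneg _
  have hrc2 : rc ^ 2 = ∑ l, Δ l ^ 2 := Real.sq_sqrt (Finset.sum_nonneg fun _ _ => sq_nonneg _)
  have hsq (l : Fin d) : Δ l ^ 2 ≤ e ^ 2 := by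
    rw [← sq_abs (Δ l)]; exact pow_le_pow_left₀ (abs_nonneg _) (hmax l) 2
  have hrcde : rc ≤ d * e := by
    refine Real.sqrt_le_iff.2 ⟨by positivity, ?_⟩
    calc ∑ l, Δ l ^ 2 ≤ ∑ l : Fin d, e ^ 2 := Finset.sum_le_sum fun l _ => hsq l
      _ = d * e ^ 2 := by simp
      _ ≤ (d * e) ^ 2 := by
        have h2 : (d : ℝ) ≤ (d : ℝ) ^ 2 := by nlinarith
        rw [mul_pow]; exact mul_le_mul_of_nonneg_right h2 (sq_nonneg e)
  have hr2 : |r ^ 2 - rc ^ 2| ≤ κ * (2 * rc + κ) := by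
    rw [sq_sub_sq, abs_mul, mul_comm]
    refine mul_le_mul hr ?_ (abs_nonneg _) hκ0.le
    have : r + rc = (r - rc) + 2 * rc := by ring
    rw [this]
    refine (abs_add_le _ _).trans ?_
    rw [abs_of_nonneg (by positivity : 0 ≤ 2 * rc)]
    linarith
  have key : ∀ x y : Fin d → ℝ, (∀ l, x l ∈ Ico (0:ℝ) κ) → (∀ l, y l ∈ Ico (0:ℝ) κ) → 
      |gg i Δ r (x, y)| ≤ 1 / 4 := by
    intro x y hx hy
    have ho : |offs i Δ (x, y) - ∑ l ∈ Finset.univ.erase i, Δ l ^ 2| ≤ (d - 1) * (2 * e * κ + κ ^ 2) := by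
      unfold offs
      rw [← Finset.sum_sub_distrib]
      refine (Finset.abs_sum_le_sum_abs _ _).trans ?_
      calc _ ≤ ∑ l ∈ Finset.univ.erase i, (2 * e * κ + κ ^ 2) := by
            refine Finset.sum_le_sum fun l _ => ?_
            have h1 : (Δ l + x l - y l) ^ 2 - Δ l ^ 2 = 2 * Δ l * (x l - y l) + (x l - y l) ^ 2 := by ring
            have h2 : |x l - y l| ≤ κ := by
              have := hx l; have := hy l
              simp only [mem_Ico] at *
              rw [abs_le]; constructor <;> linarith
            simp only
            rw [h1]
            refine (abs_add_le _ _).trans (add_le_add ?_ ?_)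
            · rw [abs_mul, abs_mul, abs_two]
              have := hmax l
              gcongr
            · rw [abs_pow]; gcongr
        _ = _ := by
          rw [Finset.sum_const, Finset.card_erase_of_mem (Finset.mem_univ _), Finset.card_univ, Fintype.card_fin,
            nsmul_eq_mul, Nat.cast_sub hd]
          simp
    have hsum : rc ^ 2 = e ^ 2 + ∑ l ∈ Finset.univ.erase i, Δ l ^ 2 := by
      rw [hrc2, ← Finset.add_sum_erase _ _ (Finset.mem_univ i), ← sq_abs (Δ i)]
    have hdiff : |r ^ 2 - offs i Δ (x, y) - e ^ 2| ≤ e / 4 := by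
      have h1 := abs_le.1 ho
      have h2 := abs_le.1 hr2
      have hb : κ * (2 * rc + κ) + (d - 1) * (2 * e * κ + κ ^ 2) ≤ e / 4 := by
        have : κ * rc ≤ κ * (d * e) := by gcongr
        have a1 : κ * (d * e) = e / 24 := by rw [← mul_assoc, hκd]; ring
        have a2 : d * (2 * e * κ + κ ^ 2) = 2 * e / 24 + κ / 24 := by
          have : d * (2 * e * κ + κ ^ 2) = (κ * d) * (2 * e + κ) := by ring
          rw [this, hκd]; ring
        nlinarith
      rw [abs_le]; constructor <;> linarith [h1.1, h1.2, h2.1, h2.2]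
    have hd1 := abs_le.1 hdiff
    have hsq2 : rootS i Δ r (x, y) ^ 2 = r ^ 2 - offs i Δ (x, y) := by
      have : rootS i Δ r (x, y) ^ 2 = max (r ^ 2 - offs i Δ (x, y)) (Δ i ^ 2 / 4) := 
        Real.sq_sqrt (le_trans (by positivity) (le_max_right _ _))
      rw [this, max_eq_left]
      rw [← sq_abs (Δ i)]
      nlinarith
    have hs0 : 0 ≤ rootS i Δ r (x, y) := Real.sqrt_nonneg _
    unfold gg
    rw [abs_mul, abs_sgn, one_mul]
    have h5 : |rootS i Δ r (x, y) - e| * (rootS i Δ r (x, y) + e) ≤ e / 4 := by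
      rw [← abs_of_nonneg (by linarith : 0 ≤ rootS i Δ r (x, y) + e), ← abs_mul, mul_comm, ← sq_sub_sq, hsq2]
      exact hdiff
    have h6 : |rootS i Δ r (x, y) - e| * e ≤ (1 / 4) * e := by
      nlinarith [abs_nonneg (rootS i Δ r (x, y) - e)]
    exact le_of_mul_le_mul_right h6 (by linarith)
  have hsub : Ico (1/4 : ℝ) (1/2) ×ˢ ((Set.pi univ fun _ : Fin d => Ico (0:ℝ) κ) ×ˢ (Set.pi univ fun _ : Fin d => Ico (0:ℝ) κ))
      ⊆ reg (M := M) i (gg i Δ r) [] [] := by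
    rintro ⟨t, x, y⟩ ⟨ht, hx, hy⟩
    have hx : ∀ l, x l ∈ Ico (0:ℝ) κ := fun l => hx l (mem_univ _)
    have hy : ∀ l, y l ∈ Ico (0:ℝ) κ := fun l => hy l (mem_univ _)
    have hg := abs_le.1 (key x y hx hy)
    simp only [mem_Ico] at ht hx hy
    refine ⟨⟨(hx i).1, by linarith [(hx i).2]⟩, ⟨(hy i).1, by linarith [(hy i).2]⟩, ?_, ?_⟩
    · intro l
      simp only [hside, mem_Ico, wordBase_nil, List.length_nil, pow_zero]
      by_cases hl : l = i
      · subst hl; rw [Function.update_self]; constructor <;> linarith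
      · rw [Function.update_of_ne hl]; constructor <;> linarith [hx l]
    · intro l
      simp only [hside, mem_Ico, wordBase_nil, List.length_nil, pow_zero]
      by_cases hl : l = i
      · subst hl; rw [Function.update_self]; constructor <;> linarith
      · rw [Function.update_of_ne hl]; constructor <;> linarith [hy l]
  have hvol : volume (Ico (1/4 : ℝ) (1/2) ×ˢ ((Set.pi univ fun _ : Fin d => Ico (0:ℝ) κ) ×ˢ (Set.pi univ fun _ : Fin d => Ico (0:ℝ) κ)))
      = ENNReal.ofReal (κ ^ (2 * d) / 4) := by
    rw [Measure.volume_eq_prod, Measure.prod_prod, Measure.volume_eq_prod, Measure.prod_prod, volume_pi_pi]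
    simp only [Real.volume_Ico, sub_zero, Finset.prod_const, Finset.card_univ, Fintype.card_fin]
    rw [← ENNReal.ofReal_pow hκ0.le, ← ENNReal.ofReal_mul (by positivity), ← ENNReal.ofReal_mul (by norm_num)]
    congr 1
    rw [two_mul, pow_add]; ring
  unfold phi
  rw [← ENNReal.ofReal_le_iff_le_toReal (vol_reg_ne_top i (measurable_gg i Δ r) _ _), ← hvol]
  exact measure_mono hsub

end geom2
end

noncomputable section

/-! ## The main estimate -/
section main1
variable {d M : ℕ}

/-- the properties of a weight that are used -/
structure IsWt (f : List (Alpha d M) → List (Alpha d M) → ℝ) : Prop where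
  nonneg : ∀ u v, 0 ≤ f u v
  addl : ∀ u v, f u v = ∑ a, f (u ++ [a]) v
  addr : ∀ u v, f u v = ∑ a, f u (v ++ [a])
  le1 : ∀ u v, f u v ≤ ((M : ℝ)⁻¹ ^ d) ^ u.length * ((M : ℝ)⁻¹ ^ (d - 1)) ^ v.length
  le2 : ∀ u v, f u v ≤ ((M : ℝ)⁻¹ ^ d) ^ v.length * ((M : ℝ)⁻¹ ^ (d - 1)) ^ u.length

lemma IsWt.swap {f : List (Alpha d M) → List (Alpha d M) → ℝ} (h : IsWt f) : IsWt (fun u v => f v u) :=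
  ⟨fun u v => h.nonneg v u, fun u v => h.addr v u, fun u v => h.addl v u, fun u v => h.le2 v u, 
    fun u v => h.le1 v u⟩

lemma isWt_phi (hd : 1 ≤ d) (hM : 2 ≤ M) (i : Fin d) {g : ZZ d → ℝ} (hg : Measurable g) : 
    IsWt (M := M) (phi i g) := by
  have e (w : List (Alpha d M)) : ((M : ℝ)⁻¹ ^ d) ^ w.length = ((M : ℝ)⁻¹) ^ w.length * ((M : ℝ)⁻¹ ^ (d-1)) ^ w.length := by
    rw [← mul_pow, ← pow_succ', Nat.sub_add_cancel hd]
  refine ⟨phi_nonneg i g, phi_add_left hM i hg, phi_add_right hM i hg, fun u v => ?_, fun u v => ?_⟩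
  · refine (phi_le i hg u v).trans ?_
    rw [e u, mul_assoc]
    gcongr
    exact min_le_left _ _
  · refine (phi_le i hg u v).trans ?_
    rw [e v, mul_comm (((M : ℝ)⁻¹ ^ (d-1)) ^ u.length), mul_assoc]
    gcongr
    exact min_le_right _ _

lemma W_sum (J : ℕ) (σ : Bool) (n : ℕ) (ω : Om d M) (ψ : Alpha d M → List (Alpha d M) → ℝ) :
    W J σ n ω (fun w => ∑ a, ψ a w) = ∑ a, W J σ n ω (ψ a) := by
  classical
  simp only [W]
  rw [Finset.sum_comm]
  refine Finset.sum_congr rfl fun w _ => ?_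
  split_ifs <;> simp

lemma W_swap (J : ℕ) (σ τ : Bool) (n m : ℕ) (ω : Om d M) (f : List (Alpha d M) → List (Alpha d M) → ℝ) :
    W J σ n ω (fun u => W J τ m ω (f u)) = W J τ m ω (fun v => W J σ n ω (fun u => f u v)) := by
  classical
  simp only [W]
  calc _ = ∑ u ∈ words d M n, ∑ v ∈ words d M m, if ret J ω σ u then (if ret J ω τ v then f u v else 0) else 0 := by
        refine Finset.sum_congr rfl fun u _ => ?_
        split_ifs <;> simp
    _ = _ := by
        rw [Finset.sum_comm]
        refine Finset.sum_congr rfl fun v _ => ?_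
        split_ifs with h
        · rfl
        · simp

lemma half_step {q : Idx d M → ℝ} {P : Measure (Om d M)} (h : IsB q P)
    (h01 : ∀ i, 0 ≤ q i ∧ q i ≤ 1) (hM : 2 ≤ M) {p p' : ℝ} {σ τ : Bool} (hστ : τ ≠ σ) (hp : 0 ≤ p) (hp' : 0 < p') (hp1' : p' ≤ 1)
    (hq : ∀ w, q (σ, w) = p) (hq' : ∀ w, q (τ, w) = p') {J n N : ℕ} (hJ : J ≤ n) (hJN : J ≤ N) (hN : 1 ≤ N)
    {f : List (Alpha d M) → List (Alpha d M) → ℝ} (hf : IsWt f) {γ X δ K Y : ℝ} 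
    (hγ : p' ≤ γ) (hγ' : (M : ℝ)⁻¹ ^ (d - 1) ≤ γ) (hδ : 0 < δ) (hK : 0 < K)
    (hY : Y = ((M : ℝ)⁻¹ ^ d) ^ (n + 1) * (K * (exp 1 * N * γ ^ N / p' ^ J))) :
    P {ω | X ≤ W J σ n ω (fun u => W J τ N ω (f u)) ∧
        W J σ (n + 1) ω (fun u => W J τ N ω (f u)) < (1 - δ) * p * W J σ n ω (fun u => W J τ N ω (f u))}
      ≤ ENNReal.ofReal (exp (-(δ ^ 2 * p * X / (2 * Y)))) + (((M ^ d) ^ (n + 1) : ℕ) : ℝ≥0∞) * ENNReal.ofReal (exp (1 - K)) := by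
  have hM0 : (0 : ℝ) < M := by positivity
  have hγ0 : 0 < γ := hp'.trans_le hγ
  have hN0 : (0 : ℝ) < N := by exact_mod_cast hN
  have hY0 : 0 < Y := by rw [hY]; positivity
  have hst := step_lower h h01 hp hq hJ (N := N) (X := X) (fun ω u => W J τ N ω (f u)) ?_ 
    (fun ω w => W_nonneg fun v _ => hf.nonneg w v) ?_ hY0 hδ
  · calc _ ≤ P ({ω | X ≤ W J σ n ω (fun u => W J τ N ω (f u)) ∧ 
          (∀ w : List (Alpha d M), w.length = n + 1 → W J τ N ω (f w) ≤ Y) ∧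
          W J σ (n + 1) ω (fun u => W J τ N ω (f u)) < (1 - δ) * p * W J σ n ω (fun u => W J τ N ω (f u))} 
          ∪ ⋃ w ∈ words d M (n + 1), {ω | Y ≤ W J τ N ω (f w)}) := by
          refine measure_mono fun ω hω => ?_
          by_cases hw : ∀ w : List (Alpha d M), w.length = n + 1 → W J τ N ω (f w) ≤ Y
          · left; exact ⟨hω.1, hw, hω.2⟩
          · right
            push Not at hw
            obtain ⟨w, h1, h2⟩ := hw
            exact mem_biUnion (mem_words.2 h1) h2.le
      _ ≤ _ := by
          refine (measure_union_le _ _).trans (add_le_add hst ?_)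
          refine (measure_biUnion_finset_le _ _).trans ?_
          calc _ ≤ ∑ w ∈ words d M (n + 1), ENNReal.ofReal (exp (1 - K)) := by
                refine Finset.sum_le_sum fun w hw => ?_
                have hT := T_upper h h01 hp' hq' hJN hN (fun v => (((M : ℝ)⁻¹ ^ d) ^ (n + 1))⁻¹ * f w v) 
                  (fun v => mul_nonneg (by positivity) (hf.nonneg _ _)) 
                  (fun v => by rw [hf.addr w v, Finset.mul_sum]) (B := (M : ℝ)⁻¹ ^ (d - 1)) (by positivity) hγ hγ' hp1'
                  (fun v _ => by
                    have := hf.le1 w v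
                    rw [mem_words.1 hw] at this
                    rw [inv_mul_le_iff₀ (by positivity)]
                    exact this) K
                refine le_trans (measure_mono fun ω hω => ?_) hT
                rw [mem_ofPred_eq] at hω ⊢
                rw [W_mul, le_inv_mul_iff₀ (by positivity), ← hY]
                exact hω
            _ = _ := by rw [Finset.sum_const, card_words, nsmul_eq_mul]
  · intro w
    refine W_dep J τ N (fun _ => f w) ?_ (fun v _ => fun x y _ => rfl)
    intro u hu hun _
    simp [Dset, hστ, hun]
  · intro ω w hw
    rw [← W_sum]
    congr 1
    funext v
    exact hf.addl w v

/-- `S_{n,m}` -/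
def SS (J n m : ℕ) (ω : Om d M) (f : List (Alpha d M) → List (Alpha d M) → ℝ) : ℝ :=
  W J false n ω (fun u => W J true m ω (f u))

/-- bad event at level `n`. -/
def bad (J n : ℕ) (p₁ p₂ X δ : ℝ) (f : List (Alpha d M) → List (Alpha d M) → ℝ) : Set (Om d M) :=
  {ω | X ≤ SS J n n ω f ∧ SS J (n + 1) n ω f < (1 - δ) * p₁ * SS J n n ω f} ∪
  {ω | p₁ * X / 2 ≤ SS J (n + 1) n ω f ∧ SS J (n + 1) (n + 1) ω f < (1 - δ) * p₂ * SS J (n + 1) n ω f}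

lemma not_bad {J n : ℕ} {p₁ p₂ X δ : ℝ} {f : List (Alpha d M) → List (Alpha d M) → ℝ} {ω : Om d M}
    (h : ω ∉ bad J n p₁ p₂ X δ f) (hδ : 0 ≤ δ) (hδ1 : δ ≤ 1 / 2) (hp1 : 0 ≤ p₁) (hp2 : 0 ≤ p₂) (hX0 : 0 ≤ X)
    (hX : X ≤ SS J n n ω f) : (1 - 2 * δ) * (p₁ * p₂) * SS J n n ω f ≤ SS J (n + 1) (n + 1) ω f := by
  simp only [bad, mem_union, mem_ofPred_eq, not_or, not_and, not_lt] at h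
  have h1 := h.1 hX
  have hS : 0 ≤ SS J n n ω f := hX0.trans hX
  have h2 := h.2 (by
    refine le_trans ?_ h1
    have : p₁ * X / 2 = (1 / 2) * p₁ * X := by ring
    rw [this]
    have : 0 ≤ 1 - δ := by linarith
    gcongr
    linarith)
  calc (1 - 2 * δ) * (p₁ * p₂) * SS J n n ω f ≤ (1 - δ) ^ 2 * (p₁ * p₂) * SS J n n ω f := by
        gcongr; nlinarith
    _ = (1 - δ) * p₂ * ((1 - δ) * p₁ * SS J n n ω f) := by ring
    _ ≤ (1 - δ) * p₂ * SS J (n + 1) n ω f := by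
        gcongr
        exact mul_nonneg (by linarith) hp2
    _ ≤ _ := h2

/-- error term -/
def En (d M : ℕ) (c β : ℝ) (n : ℕ) : ℝ := 
  exp (-(c * β ^ n / (n + 2) ^ 5)) + ((M : ℝ) ^ d) ^ (n + 1) * exp (1 - β ^ n)

lemma bad_prob {q : Idx d M → ℝ} {P : Measure (Om d M)} (h : IsB q P) (hd : 1 ≤ d) (hM : 2 ≤ M) {p₁ p₂ : ℝ}
    (hp₁0 : 0 < p₁) (hp₂0 : 0 < p₂) (hp₁1 : p₁ ≤ 1) (hp₂1 : p₂ ≤ 1)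
    (hq1 : ∀ w, q (false, w) = p₁) (hq2 : ∀ w, q (true, w) = p₂) {β : ℝ} (hβ : 1 < β)
    {γ₁ γ₂ : ℝ} (hγ₁ : p₁ ≤ γ₁) (hγ₁' : (M : ℝ)⁻¹ ^ (d - 1) ≤ γ₁) (hγ₂ : p₂ ≤ γ₂) (hγ₂' : (M : ℝ)⁻¹ ^ (d - 1) ≤ γ₂)
    (hβ1 : β ^ 2 * γ₁ ≤ p₁ * p₂ * (M : ℝ) ^ d) (hβ2 : β ^ 2 * γ₂ ≤ p₁ * p₂ * (M : ℝ) ^ d)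
    (hp₁M : 1 ≤ p₁ * (M : ℝ) ^ d) {a : ℝ} (ha : 0 < a) {J n : ℕ} (hJ : J ≤ n) (hn : 1 ≤ n)
    {f : List (Alpha d M) → List (Alpha d M) → ℝ} (hf : IsWt f) :
    P (bad J n p₁ p₂ (a * (p₁ * p₂) ^ (n - J)) (1 / (4 * (n + 2) ^ 2)) f) ≤ 
      ENNReal.ofReal (2 * En d M (a / (64 * exp 1)) β n) := by
  have h01 : ∀ i, 0 ≤ q i ∧ q i ≤ 1 := by
    rintro ⟨b, w⟩
    cases b
    · rw [hq1]; exact ⟨hp₁0.le, hp₁1⟩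
    · rw [hq2]; exact ⟨hp₂0.le, hp₂1⟩
  have hM0 : (0 : ℝ) < M := by positivity
  have hγ₁0 : 0 < γ₁ := hp₁0.trans_le hγ₁
  have hγ₂0 : 0 < γ₂ := hp₂0.trans_le hγ₂
  have hβ0 : 0 < β := by linarith
  have hn0 : (0 : ℝ) < n := by exact_mod_cast hn
  set δ : ℝ := 1 / (4 * (n + 2) ^ 2) with hδdef
  have hδ : 0 < δ := by positivity
  set X := a * (p₁ * p₂) ^ (n - J) with hX
  have hMd : (M : ℝ)⁻¹ ^ d = ((M : ℝ) ^ d)⁻¹ := inv_pow _ _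
  have hcast (K : ℝ) : (((M ^ d) ^ (n + 1) : ℕ) : ℝ≥0∞) * ENNReal.ofReal (exp (1 - K)) = 
      ENNReal.ofReal (((M : ℝ) ^ d) ^ (n + 1) * exp (1 - K)) := by
    rw [ENNReal.ofReal_mul (by positivity)]
    congr 1
    rw [← ENNReal.ofReal_natCast]
    push_cast; rfl
  have hqJ : (p₁ * p₂) ^ n = (p₁ * p₂) ^ (n - J) * (p₁ * p₂) ^ J := by
    rw [← pow_add, Nat.sub_add_cancel hJ]
  have gen : ∀ Z K : ℝ, a / (64 * exp 1) * β ^ n / (n + 2) ^ 5 ≤ Z → β ^ n ≤ K → 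
      ENNReal.ofReal (exp (-Z)) + (((M ^ d) ^ (n + 1) : ℕ) : ℝ≥0∞) * ENNReal.ofReal (exp (1 - K)) ≤ 
      ENNReal.ofReal (En d M (a / (64 * exp 1)) β n) := by
    intro Z K h1 h2
    rw [hcast, ← ENNReal.ofReal_add (by positivity) (by positivity)]
    refine ENNReal.ofReal_le_ofReal ?_
    unfold En
    gcongr
  have hZ : ∀ (x y : ℝ) (k : ℕ), 0 < y → k ≤ n + 1 → n ≤ k → 1 ≤ k → (a / (2 * exp 1)) * β ^ k / k * y ≤ x → 
      a / (64 * exp 1) * β ^ n / (n + 2) ^ 5 ≤ δ ^ 2 * x / (2 * y) := by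
    intro x y k hy hk hk1 hk2 hxy
    have hk0 : (0 : ℝ) < k := by exact_mod_cast hk2
    have hkn : (k : ℝ) ≤ n + 2 := by exact_mod_cast (by omega : k ≤ n + 2)
    calc a / (64 * exp 1) * β ^ n / (n + 2) ^ 5 = δ ^ 2 * ((a / (2 * exp 1)) * β ^ n / (n + 2)) / 2 := by
          rw [hδdef]; field_simp; norm_num
      _ ≤ δ ^ 2 * ((a / (2 * exp 1)) * β ^ k / k) / 2 := by
          gcongr
          exact hβ.le
      _ = δ ^ 2 * ((a / (2 * exp 1)) * β ^ k / k * y) / (2 * y) := by field_simp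
      _ ≤ _ := by gcongr
  unfold bad
  refine (measure_union_le _ _).trans ?_
  rw [two_mul, ENNReal.ofReal_add (by unfold En; positivity) (by unfold En; positivity)]
  refine add_le_add ?_ ?_
  · refine (half_step h h01 hM (σ := false) (τ := true) (by simp) hp₁0.le hp₂0 hp₂1 hq1 hq2 hJ hJ hn hf hγ₂ hγ₂' hδ 
      (K := β ^ n) (by positivity) rfl).trans ?_
    refine gen _ _ ?_ le_rfl
    rw [mul_assoc (δ ^ 2)]
    refine hZ _ _ n (by positivity) (by omega) le_rfl hn ?_
    calc a / (2 * exp 1) * β ^ n / n * (((M : ℝ)⁻¹ ^ d) ^ (n + 1) * (β ^ n * (exp 1 * n * γ₂ ^ n / p₂ ^ J)))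
        = a / 2 * (β ^ 2 * γ₂) ^ n / (((M : ℝ) ^ d) ^ (n + 1) * p₂ ^ J) := by
          rw [hMd, inv_pow, mul_pow]; field_simp; try ring
      _ ≤ a / 1 * (p₁ * p₂ * (M : ℝ) ^ d) ^ n / (((M : ℝ) ^ d) ^ (n + 1) * p₂ ^ J) := by
          gcongr; norm_num
      _ = a * (p₁ * p₂) ^ (n - J) * p₁ ^ J / ((M : ℝ) ^ d) := by
          rw [mul_pow _ ((M : ℝ) ^ d), hqJ, mul_pow p₁ p₂ J, pow_succ ((M : ℝ) ^ d)]; field_simp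
      _ ≤ a * (p₁ * p₂) ^ (n - J) * 1 / ((M : ℝ) ^ d) := by
          gcongr
          exact pow_le_one₀ hp₁0.le hp₁1
      _ ≤ p₁ * X := by
          rw [hX, div_le_iff₀ (by positivity)]
          have : 0 ≤ a * (p₁ * p₂) ^ (n - J) := by positivity
          nlinarith
  · have hS (m : ℕ) (ω : Om d M) : SS J (n + 1) m ω f = W J true m ω (fun v => W J false (n + 1) ω (fun u => f u v)) := W_swap _ _ _ _ _ _ _
    simp only [hS]
    refine (half_step h h01 hM (σ := true) (τ := false) (by simp) hp₂0.le hp₁0 hp₁1 hq2 hq1 hJ (by omega : J ≤ n + 1) (by omega) 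
      hf.swap hγ₁ hγ₁' hδ (K := β ^ (n + 1)) (by positivity) rfl).trans ?_
    refine gen _ _ ?_ (pow_le_pow_right₀ hβ.le (by omega))
    rw [mul_assoc (δ ^ 2)]
    refine hZ _ _ (n + 1) (by positivity) (by omega) (by omega) (by omega) ?_
    calc a / (2 * exp 1) * β ^ (n + 1) / (n + 1 : ℕ) * (((M : ℝ)⁻¹ ^ d) ^ (n + 1) * (β ^ (n + 1) * (exp 1 * (n + 1 : ℕ) * γ₁ ^ (n + 1) / p₁ ^ J)))
        = a / 2 * (β ^ 2 * γ₁) ^ (n + 1) / (((M : ℝ) ^ d) ^ (n + 1) * p₁ ^ J) := by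
          rw [hMd, inv_pow, mul_pow]; field_simp; try ring
      _ ≤ a / 2 * (p₁ * p₂ * (M : ℝ) ^ d) ^ (n + 1) / (((M : ℝ) ^ d) ^ (n + 1) * p₁ ^ J) := by
          gcongr
      _ = a / 2 * (p₁ * p₂) ^ (n - J) * (p₁ * p₂) * p₂ ^ J := by
          rw [mul_pow _ ((M : ℝ) ^ d), pow_succ (p₁ * p₂) n, hqJ, mul_pow p₁ p₂ J]; field_simp
      _ ≤ a / 2 * (p₁ * p₂) ^ (n - J) * (p₁ * p₂) * 1 := by
          gcongr
          exact pow_le_one₀ hp₂0.le hp₂1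
      _ = p₂ * (p₁ * X / 2) := by rw [hX]; ring

end main1
end

noncomputable section

section main2
variable {d M : ℕ}

lemma exists_params (hd : 1 ≤ d) (hM : 2 ≤ M) {p₁ p₂ : ℝ} 
    (hp₁ : (M : ℝ) ^ (-(d : ℤ)) < p₁) (hp₂ : (M : ℝ) ^ (-(d : ℤ)) < p₂)
    (hprod : (M : ℝ) ^ (1 - 2 * (d : ℤ)) < p₁ * p₂) :
    ∃ β γ₁ γ₂ : ℝ, 1 < β ∧ p₁ ≤ γ₁ ∧ (M : ℝ)⁻¹ ^ (d - 1) ≤ γ₁ ∧ p₂ ≤ γ₂ ∧ (M : ℝ)⁻¹ ^ (d - 1) ≤ γ₂ ∧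
      β ^ 2 * γ₁ ≤ p₁ * p₂ * (M : ℝ) ^ d ∧ β ^ 2 * γ₂ ≤ p₁ * p₂ * (M : ℝ) ^ d := by
  have hM0 : (0 : ℝ) < M := by positivity
  have hz : (M : ℝ) ^ (-(d : ℤ)) = ((M : ℝ) ^ d)⁻¹ := by rw [zpow_neg, zpow_natCast]
  have hD : (0 : ℝ) < (M : ℝ) ^ d := by positivity
  have hp₁0 : 0 < p₁ := lt_trans (by positivity) hp₁
  have hp₂0 : 0 < p₂ := lt_trans (by positivity) hp₂
  rw [hz, inv_lt_iff_one_lt_mul₀ hD] at hp₁ hp₂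
  have hz2 : (M : ℝ) ^ (1 - 2 * (d : ℤ)) = (M : ℝ)⁻¹ ^ (d - 1) / (M : ℝ) ^ d := by
    rw [inv_pow, ← zpow_natCast, ← zpow_natCast, ← zpow_neg, ← zpow_sub₀ hM0.ne', Nat.cast_sub hd]
    congr 1
    push_cast; ring
  rw [hz2, div_lt_iff₀ hD] at hprod
  set Q := p₁ * p₂ * (M : ℝ) ^ d with hQ
  have key : ∀ p, 0 < p → p < Q → 1 < Q / max p ((M : ℝ)⁻¹ ^ (d - 1)) := by
    intro p hp hpQ
    rw [one_lt_div (lt_max_of_lt_left hp)]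
    exact max_lt hpQ hprod
  have h1 := key p₁ hp₁0 (by rw [hQ]; nlinarith)
  have h2 := key p₂ hp₂0 (by rw [hQ]; nlinarith)
  set γ₁ := max p₁ ((M : ℝ)⁻¹ ^ (d - 1)) with hγ₁
  set γ₂ := max p₂ ((M : ℝ)⁻¹ ^ (d - 1)) with hγ₂
  have g1 : 0 < γ₁ := lt_max_of_lt_left hp₁0
  have g2 : 0 < γ₂ := lt_max_of_lt_left hp₂0
  refine ⟨√(min (Q / γ₁) (Q / γ₂)), γ₁, γ₂, ?_, le_max_left _ _, le_max_right _ _, le_max_left _ _, le_max_right _ _, ?_, ?_⟩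
  · rw [Real.lt_sqrt (by norm_num), one_pow]; exact lt_min h1 h2
  · rw [Real.sq_sqrt (by positivity), ← le_div_iff₀ g1]; exact min_le_left _ _
  · rw [Real.sq_sqrt (by positivity), ← le_div_iff₀ g2]; exact min_le_right _ _

lemma ev_growth {β c L : ℝ} (hβ : 1 < β) (hc : 0 < c) (hL : 0 < L) :
    ∀ᶠ n : ℕ in Filter.atTop, L * (n + 1) ≤ c * β ^ n / (n + 2) ^ 5 := by
  have h1 := tendsto_pow_const_div_const_pow_of_one_lt 6 hβ
  have h2 := (Filter.tendsto_add_atTop_iff_nat 2).2 h1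
  have hβ0 : 0 < β := by linarith
  have h3 := h2.eventually_lt_const (u := c / (L * β ^ 2)) (by positivity)
  filter_upwards [h3] with n hn
  rw [div_lt_div_iff₀ (by positivity) (by positivity)] at hn
  rw [le_div_iff₀ (by positivity)]
  push_cast at hn
  have h4 : ((n : ℝ) + 2) ^ 6 * L * β ^ 2 ≤ c * β ^ n * β ^ 2 := by
    rw [mul_assoc c, ← pow_add]; linarith
  have h5 := le_of_mul_le_mul_right h4 (by positivity)
  have h6 : 0 ≤ L * ((n : ℝ) + 2) ^ 5 := by positivity
  nlinarith

lemma summable_err (hM : 2 ≤ M) {β c : ℝ} (hβ : 1 < β) (hc : 0 < c) {H : ℕ} (hH : 1 ≤ H) :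
    Summable (fun n : ℕ => ((H : ℝ) ^ n + 1) * (2 * En d M c β n)) := by
  have hM1 : (1 : ℝ) ≤ M := by exact_mod_cast (by omega : 1 ≤ M)
  have hH1 : (1 : ℝ) ≤ H := by exact_mod_cast hH
  set D := (M : ℝ) ^ d with hDdef
  have hD : 1 ≤ D := one_le_pow₀ hM1
  set Λ := 2 * H * D with hΛ
  have hHD : 1 ≤ H * D := one_le_mul_of_one_le_of_one_le hH1 hD
  have hΛ1 : 1 < Λ := by rw [hΛ]; nlinarith
  have hL : 0 < Real.log Λ := Real.log_pos hΛ1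
  have hexp : ∀ n : ℕ, ∀ Z, Real.log Λ * (n + 1) ≤ Z → exp (-Z) ≤ (1 / Λ) ^ (n + 1) := by
    intro n Z hZ
    calc exp (-Z) ≤ exp (-(Real.log Λ * (n + 1))) := by gcongr
      _ = _ := by
        rw [Real.exp_neg, one_div, inv_pow]
        congr 1
        rw [mul_comm, ← Nat.cast_succ, Real.exp_nat_mul, Real.exp_log (by linarith)]
  refine Summable.of_norm_bounded_eventually_nat (g := fun n => 16 * (1 / 2 : ℝ) ^ n) 
    (summable_geometric_two.mul_left 16) ?_
  filter_upwards [ev_growth hβ hc hL, ev_growth hβ one_pos hL] with n h1 h2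
  have hE0 : 0 ≤ En d M c β n := by unfold En; positivity
  rw [Real.norm_of_nonneg (by positivity)]
  have h2' : Real.log Λ * (n + 1) ≤ β ^ n := by
    refine h2.trans ?_
    rw [one_mul]
    refine div_le_self (by positivity) (one_le_pow₀ ?_)
    have : (0 : ℝ) ≤ n := by positivity
    linarith
  have hE : En d M c β n ≤ 4 * (1 / (2 * H)) ^ (n + 1) := by
    unfold En
    have e1 := hexp n _ h1
    have e2 := hexp n _ h2'
    have e3 : exp (1 - β ^ n) ≤ 3 * (1 / Λ) ^ (n + 1) := by
      rw [sub_eq_add_neg, Real.exp_add]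
      have := Real.exp_one_lt_d9
      gcongr
      linarith
    have e4 : (1 / Λ) ^ (n + 1) ≤ (1 / (2 * (H : ℝ))) ^ (n + 1) := by
      gcongr
      rw [hΛ]; nlinarith
    have e5 : D ^ (n + 1) * (1 / Λ) ^ (n + 1) = (1 / (2 * (H : ℝ))) ^ (n + 1) := by
      rw [← mul_pow]; congr 1; rw [hΛ]; field_simp
    have e6 : D ^ (n + 1) * exp (1 - β ^ n) ≤ D ^ (n + 1) * (3 * (1 / Λ) ^ (n + 1)) := by gcongr
    linarith
  calc ((H : ℝ) ^ n + 1) * (2 * En d M c β n) ≤ (H ^ n + H ^ n) * (2 * (4 * (1 / (2 * H)) ^ (n + 1))) := by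
        gcongr
        exact one_le_pow₀ hH1
    _ = 16 * (1 / 2) ^ n * (1 / (2 * H)) := by
        rw [pow_succ, one_div, one_div, mul_inv, mul_pow, inv_pow (H : ℝ)]
        field_simp; norm_num
    _ ≤ 16 * (1 / 2) ^ n * 1 := by
        gcongr
        rw [div_le_one (by positivity)]; linarith
    _ = _ := mul_one _

/-- mesh of distances -/
def mesh (Δ : Fin d → ℝ) (H n j : ℕ) : ℝ :=
  √(∑ l, Δ l ^ 2) - 1 / (24 * d) + 2 * (1 / (24 * d)) * (j / (H : ℝ) ^ n)

/-- the interval of distances -/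
def II (Δ : Fin d → ℝ) : Set ℝ := {r | |r - √(∑ l, Δ l ^ 2)| ≤ 1 / (24 * d)}

lemma mesh_mem (Δ : Fin d → ℝ) {H n j : ℕ} (hj : j ≤ H ^ n) : mesh Δ H n j ∈ II Δ := by
  have h0 : (0 : ℝ) ≤ 1 / (24 * d) := by positivity
  have h1 : (0 : ℝ) ≤ (j : ℝ) / (H : ℝ) ^ n := by positivity
  have h2 : (j : ℝ) / (H : ℝ) ^ n ≤ 1 := div_le_one_of_le₀ (by exact_mod_cast hj) (by positivity)
  simp only [II, mesh, mem_ofPred_eq]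
  rw [abs_le]
  constructor <;> nlinarith

lemma mesh_near (hd : 1 ≤ d) (Δ : Fin d → ℝ) {H : ℕ} (hH : 1 ≤ H) (n : ℕ) {r : ℝ} (hr : r ∈ II Δ) : 
    ∃ j ≤ H ^ n, |r - mesh Δ H n j| ≤ 1 / (H : ℝ) ^ n := by
  have hd' : (1 : ℝ) ≤ d := by exact_mod_cast hd
  have hH0 : (0 : ℝ) < H := by exact_mod_cast hH
  have hHn : (0 : ℝ) < (H : ℝ) ^ n := by positivity
  simp only [II, mem_ofPred_eq, abs_le] at hr
  simp only [mesh]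
  have hκ : (0 : ℝ) < 1 / (24 * d) := by positivity
  have hκ1 : (1 : ℝ) / (24 * d) ≤ 1 / 2 := by
    rw [div_le_div_iff₀ (by positivity) (by norm_num)]; linarith
  set κ : ℝ := 1 / (24 * d)
  set rc := √(∑ l, Δ l ^ 2)
  set t := (r - (rc - κ)) / (2 * κ) * (H : ℝ) ^ n with ht
  have ht0 : 0 ≤ t := by
    rw [ht]; exact mul_nonneg (div_nonneg (by linarith) (by linarith)) hHn.le
  have ht1 : t ≤ (H : ℝ) ^ n := by
    rw [ht]
    refine mul_le_of_le_one_left hHn.le ?_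
    rw [div_le_one (by linarith)]; linarith
  have hrt : r = rc - κ + 2 * κ * (t / (H : ℝ) ^ n) := by
    rw [ht]; field_simp; ring
  refine ⟨⌊t⌋₊, ?_, ?_⟩
  · have := Nat.floor_le_floor ht1
    rwa [← Nat.cast_pow, Nat.floor_natCast] at this
  · have h1 := Nat.floor_le ht0
    have h2 := Nat.lt_floor_add_one t
    rw [hrt]
    have : rc - κ + 2 * κ * (t / (H : ℝ) ^ n) - (rc - κ + 2 * κ * (⌊t⌋₊ / (H : ℝ) ^ n)) = 
      2 * κ * (t - ⌊t⌋₊) / (H : ℝ) ^ n := by ring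
    rw [this, abs_div, abs_of_pos hHn]
    gcongr
    rw [abs_of_nonneg (by nlinarith)]
    nlinarith

lemma II_bounds (hd : 1 ≤ d) {i : Fin d} {Δ : Fin d → ℝ} (h3 : 3 ≤ |Δ i|) (hmax : ∀ l, |Δ l| ≤ |Δ i|) {r : ℝ}
    (hr : r ∈ II Δ) : 0 < r ∧ r ≤ 2 * d * |Δ i| := by
  have hd' : (1 : ℝ) ≤ d := by exact_mod_cast hd
  have hκ1 : (1 : ℝ) / (24 * d) ≤ 1 / 2 := by
    rw [div_le_div_iff₀ (by positivity) (by norm_num)]; linarith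
  simp only [II, mem_ofPred_eq, abs_le] at hr
  have hsq (l : Fin d) : Δ l ^ 2 ≤ |Δ i| ^ 2 := by
    rw [← sq_abs (Δ l)]; exact pow_le_pow_left₀ (abs_nonneg _) (hmax l) 2
  have h1 : |Δ i| ≤ √(∑ l, Δ l ^ 2) := by
    refine Real.le_sqrt_of_sq_le ?_
    rw [sq_abs]
    exact Finset.single_le_sum (f := fun l => Δ l ^ 2) (fun _ _ => sq_nonneg _) (Finset.mem_univ i)
  have h2 : √(∑ l, Δ l ^ 2) ≤ d * |Δ i| := by
    refine Real.sqrt_le_iff.2 ⟨by positivity, ?_⟩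
    calc ∑ l, Δ l ^ 2 ≤ ∑ l : Fin d, |Δ i| ^ 2 := Finset.sum_le_sum fun l _ => hsq l
      _ = d * |Δ i| ^ 2 := by simp
      _ ≤ (d * |Δ i|) ^ 2 := by
        have h2 : (d : ℝ) ≤ (d : ℝ) ^ 2 := by nlinarith
        rw [mul_pow]; exact mul_le_mul_of_nonneg_right h2 (sq_nonneg _)
  constructor
  · linarith
  · nlinarith

lemma W_const_le (J : ℕ) (σ : Bool) (n : ℕ) (ω : Om d M) {ψ ψ' : List (Alpha d M) → ℝ} {ε : ℝ} (hε : 0 ≤ ε)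
    (h : ∀ w, ψ w ≤ ψ' w + ε) : W J σ n ω ψ ≤ W J σ n ω ψ' + ((M : ℝ) ^ d) ^ n * ε := by
  classical
  have : ((M : ℝ) ^ d) ^ n * ε = ∑ w ∈ words d M n, ε := by
    rw [Finset.sum_const, card_words, nsmul_eq_mul]; push_cast; rfl
  rw [this, W, W, ← Finset.sum_add_distrib]
  refine Finset.sum_le_sum fun w _ => ?_
  split_ifs
  · exact h w
  · linarith

lemma SS_lip (J n : ℕ) (ω : Om d M) {f f' : List (Alpha d M) → List (Alpha d M) → ℝ} {ε : ℝ} (hε : 0 ≤ ε)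
    (h : ∀ u v, f u v ≤ f' u v + ε) : SS J n n ω f ≤ SS J n n ω f' + (((M : ℝ) ^ d) ^ 2) ^ n * ε := by
  refine (W_const_le J false n ω (by positivity) 
    (fun u => W_const_le J true n ω hε (fun v => h u v))).trans (le_of_eq ?_)
  unfold SS
  rw [← pow_mul, ← pow_mul, ← pow_mul, ← mul_assoc, ← pow_add]
  congr 3
  ring

lemma good_induct (hd : 1 ≤ d) (hM : 2 ≤ M) {i : Fin d} {Δ : Fin d → ℝ} (h3 : 3 ≤ |Δ i|) (hmax : ∀ l, |Δ l| ≤ |Δ i|) 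
    {p₁ p₂ : ℝ} (hp₁0 : 0 < p₁) (hp₂0 : 0 < p₂) (hp₁1 : p₁ ≤ 1) (hp₂1 : p₂ ≤ 1)
    {a : ℝ} (ha : a = (1 / (24 * d) : ℝ) ^ (2 * d) / 8) {H : ℕ} (hH : 1 ≤ H) (hHq : 4 * ((M : ℝ) ^ d) ^ 2 ≤ p₁ * p₂ * H)
    {J : ℕ} (hbig : ∀ n, J ≤ n → 16 * d * ((M : ℝ) ^ d) ^ 2 * (n + 2) ^ 2 ≤ a * (p₁ * p₂) * 4 ^ n)
    {ω : Om d M} (hω : ∀ n, J ≤ n → ∀ j ≤ H ^ n, ω ∉ bad J n p₁ p₂ (a * (p₁ * p₂) ^ (n - J)) (1 / (4 * (n + 2) ^ 2)) 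
      (phi i (gg i Δ (mesh Δ H n j)))) :
    ∀ n, J ≤ n → ∀ r ∈ II Δ, a * (1 + 1 / (n + 1)) * (p₁ * p₂) ^ (n - J) ≤ SS J n n ω (phi i (gg i Δ r)) := by
  have hM0 : (0 : ℝ) < M := by positivity
  have hd0 : (1 : ℝ) ≤ d := by exact_mod_cast hd
  have ha0 : 0 < a := by rw [ha]; positivity
  have hH0 : (0 : ℝ) < H := by exact_mod_cast hH
  set q := p₁ * p₂ with hq
  have hq0 : 0 < q := by positivity
  have hq1 : q ≤ 1 := by rw [hq]; nlinarith
  intro n hn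
  induction n, hn using Nat.le_induction with
  | base =>
    intro r hr
    have hw := isWt_phi (M := M) hd hM i (measurable_gg i Δ r)
    have h1 : SS J J J ω (phi i (gg i Δ r)) = phi (M := M) i (gg i Δ r) [] [] := by
      unfold SS
      rw [W_total le_rfl, W_total le_rfl]
      · intro w _; exact hw.addr _ _
      · intro w _
        rw [← W_sum]
        congr 1
        funext v
        exact hw.addl w v
    rw [h1, Nat.sub_self, pow_zero, mul_one]
    refine le_trans ?_ (base_lower hd i Δ h3 hmax hr)
    have : (1 : ℝ) / (J + 1) ≤ 1 := by
      rw [div_le_one (by positivity)]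
      have : (0 : ℝ) ≤ J := by positivity
      linarith
    rw [ha] at ha0 ⊢
    nlinarith
  | succ n hn ih =>
    intro r hr
    obtain ⟨j, hj, hrj⟩ := mesh_near hd Δ hH n hr
    set r' := mesh Δ H n j
    have hr' : r' ∈ II Δ := mesh_mem Δ hj
    have hS := ih r' hr'
    have hb := II_bounds hd h3 hmax hr
    have hb' := II_bounds hd h3 hmax hr'
    have hlip := SS_lip (M := M) J (n + 1) ω (f := phi i (gg i Δ r')) (f' := phi i (gg i Δ r)) (ε := 2 * (4 * d * (1 / (H : ℝ) ^ n))) 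
      (by positivity) (fun u v => by
        refine phi_lip hM i (measurable_gg i Δ r') (measurable_gg i Δ r) (fun z => ?_) u v
        refine (gg_lip i Δ h3 hb'.1.le hb.1.le hb'.2 hb.2 z).trans ?_
        rw [abs_sub_comm]
        gcongr)
    have hinv : 0 < (1 : ℝ) / (n + 1) := by positivity
    have hqn : 0 < q ^ (n - J) := by positivity
    have hX : a * q ^ (n - J) ≤ SS J n n ω (phi i (gg i Δ r')) := by
      refine le_trans ?_ hS
      gcongr
      nlinarith
    have hn2 : (1 : ℝ) ≤ (n + 2) ^ 2 := one_le_pow₀ (by have : (0 : ℝ) ≤ n := by positivity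
                                                        linarith)
    have hδ : (1 : ℝ) / (4 * (n + 2) ^ 2) ≤ 1 / 4 := by
      gcongr; linarith
    have hstep := not_bad (hω n hn j hj) (by positivity) (by linarith) hp₁0.le hp₂0.le (by positivity) hX
    set A := a * (1 + 1 / ((n : ℝ) + 1)) with hA
    have hAa : a ≤ A := by rw [hA]; nlinarith
    have hA' : a * (1 + 1 / ((n + 1 : ℕ) + 1 : ℝ)) = A * (1 - 1 / (n + 2) ^ 2) := by
      rw [hA]; push_cast; field_simp; ring
    have hqs : q ^ (n + 1 - J) = q * q ^ (n - J) := by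
      rw [← pow_succ']; congr 1; omega
    rw [hA', hqs]
    have e1 : (1 - 2 * (1 / (4 * ((n : ℝ) + 2) ^ 2))) * q * (A * q ^ (n - J)) ≤ SS J (n + 1) (n + 1) ω (phi i (gg i Δ r')) := by
      refine le_trans ?_ hstep
      have : 0 ≤ (1 - 2 * (1 / (4 * ((n : ℝ) + 2) ^ 2))) * q := mul_nonneg (by linarith) hq0.le
      gcongr
    have e2 : (((M : ℝ) ^ d) ^ 2) ^ (n + 1) * (2 * (4 * d * (1 / (H : ℝ) ^ n))) ≤ a * q * q ^ (n - J) / (2 * (n + 2) ^ 2) := by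
      have f1 : (((M : ℝ) ^ d) ^ 2) ^ n / (H : ℝ) ^ n ≤ q ^ n / 4 ^ n := by
        rw [← div_pow, ← div_pow]
        gcongr ?_ ^ n
        rw [div_le_div_iff₀ hH0 (by norm_num)]
        linarith
      have f2 : q ^ n ≤ q ^ (n - J) := pow_le_pow_of_le_one hq0.le hq1 (by omega)
      calc (((M : ℝ) ^ d) ^ 2) ^ (n + 1) * (2 * (4 * d * (1 / (H : ℝ) ^ n))) 
          = 8 * d * ((M : ℝ) ^ d) ^ 2 * ((((M : ℝ) ^ d) ^ 2) ^ n / (H : ℝ) ^ n) := by rw [pow_succ]; ring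
        _ ≤ 8 * d * ((M : ℝ) ^ d) ^ 2 * (q ^ (n - J) / 4 ^ n) := by
            refine mul_le_mul_of_nonneg_left (f1.trans ?_) (by positivity)
            gcongr
        _ = (16 * d * ((M : ℝ) ^ d) ^ 2 * (n + 2) ^ 2) * (q ^ (n - J) / (4 ^ n * (2 * (n + 2) ^ 2))) := by
            field_simp; norm_num
        _ ≤ (a * q * 4 ^ n) * (q ^ (n - J) / (4 ^ n * (2 * (n + 2) ^ 2))) := by
            exact mul_le_mul_of_nonneg_right (hbig n hn) (by positivity)
        _ = _ := by field_simp
    have e3 : a * q * q ^ (n - J) / (2 * (n + 2) ^ 2) ≤ A * q * q ^ (n - J) / (2 * (n + 2) ^ 2) := by gcongr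
    have e4 : A * (1 - 1 / ((n : ℝ) + 2) ^ 2) * (q * q ^ (n - J)) = 
      (1 - 2 * (1 / (4 * ((n : ℝ) + 2) ^ 2))) * q * (A * q ^ (n - J)) - A * q * q ^ (n - J) / (2 * (n + 2) ^ 2) := by
      field_simp; ring
    rw [e4]
    linarith

end main2
end

noncomputable section

section propA
variable {d M : ℕ}

/-- at level `n`, two retained cubes realise distance `r` -/
def Hit (Δ : Fin d → ℝ) (r : ℝ) (n : ℕ) (ω : Om d M) : Prop :=
  ∃ u v : List (Alpha d M), u.length = n ∧ v.length = n ∧ ret 0 ω false u ∧ ret 0 ω true v ∧ Touch Δ r u v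

/-- the interval event -/
def GG (Δ : Fin d → ℝ) : Set (Om d M) :=
  {ω | ∃ a b : ℚ, 0 < a ∧ a < b ∧ ∃ N : ℕ, ∀ n, N ≤ n → ∀ r : ℚ, a < r → r < b → Hit Δ r n ω}

lemma Hit_dep (Δ : Fin d → ℝ) (r : ℝ) (n : ℕ) : 
    DependsOn (fun ω : Om d M => Hit Δ r n ω) {i | i.2.1.length ≤ n} := by
  intro x y hxy
  simp only [Hit, eq_iff_iff]
  refine exists_congr fun u => exists_congr fun v => and_congr_right fun hu => and_congr_right fun hv => ?_
  have h1 := ret_dep (d := d) (M := M) 0 false u (s := {i | i.2.1.length ≤ n}) (fun w hw hl _ => by simpa using hl.trans hu.le) hxy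
  have h2 := ret_dep (d := d) (M := M) 0 true v (s := {i | i.2.1.length ≤ n}) (fun w hw hl _ => by simpa using hl.trans hv.le) hxy
  simp only at h1 h2
  rw [h1, h2]

lemma finite_lens (n : ℕ) : {i : Idx d M | i.2.1.length ≤ n}.Finite := by
  have := Dset_finite (d := d) (M := M) false n n
  simpa [Dset] using this

lemma measurableSet_GG (Δ : Fin d → ℝ) : MeasurableSet (GG (M := M) Δ) := by
  have h (r : ℝ) (n : ℕ) : MeasurableSet {ω : Om d M | Hit Δ r n ω} :=
    measurableSet_setOfPred.2 ((Hit_dep Δ r n).measurable_fin (finite_lens n))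
  have : GG (M := M) Δ = ⋃ a : ℚ, ⋃ b : ℚ, ⋃ (_ : 0 < a ∧ a < b), ⋃ N : ℕ, ⋂ n : ℕ, ⋂ (_ : N ≤ n), ⋂ r : ℚ, ⋂ (_ : a < r ∧ r < b),
      {ω : Om d M | Hit Δ r n ω} := by
    ext ω
    simp only [GG, mem_iUnion, mem_iInter, mem_ofPred_eq, exists_prop, and_imp, and_assoc]
  rw [this]
  refine MeasurableSet.iUnion fun a => MeasurableSet.iUnion fun b => MeasurableSet.iUnion fun _ => MeasurableSet.iUnion fun N =>
    MeasurableSet.iInter fun n => MeasurableSet.iInter fun _ => MeasurableSet.iInter fun r => MeasurableSet.iInter fun _ => h r n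

lemma SS_dep (J n m : ℕ) (f : List (Alpha d M) → List (Alpha d M) → ℝ) :
    DependsOn (fun ω : Om d M => SS J n m ω f) {i | J < i.2.1.length ∧ i.2.1.length ≤ max n m} := by
  unfold SS
  refine W_dep J false n (fun ω u => W J true m ω (f u)) ?_ (fun w _ => W_dep J true m (fun _ => f w) ?_ (fun _ _ _ _ _ => rfl))
  · intro u hu h1 h2
    exact ⟨h2, h1.trans (le_max_left _ _)⟩
  · intro u hu h1 h2
    exact ⟨h2, h1.trans (le_max_right _ _)⟩

lemma bad_dep (J n : ℕ) (p₁ p₂ X δ : ℝ) (f : List (Alpha d M) → List (Alpha d M) → ℝ) :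
    DependsOn (fun ω : Om d M => ω ∈ bad J n p₁ p₂ X δ f) {i | J < i.2.1.length ∧ i.2.1.length ≤ n + 1} := by
  intro x y hxy
  have h1 := SS_dep J n n f (x := x) (y := y) (fun i hi => hxy i ⟨hi.1, hi.2.trans (by simp)⟩)
  have h2 := SS_dep J (n+1) n f (x := x) (y := y) (fun i hi => hxy i ⟨hi.1, hi.2.trans (by simp)⟩)
  have h3 := SS_dep J (n+1) (n+1) f (x := x) (y := y) (fun i hi => hxy i ⟨hi.1, hi.2.trans (by simp)⟩)
  simp only at h1 h2 h3
  simp only [bad, mem_union, mem_ofPred_eq, h1, h2, h3]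

lemma SS_pos {J n : ℕ} {ω : Om d M} {f : List (Alpha d M) → List (Alpha d M) → ℝ} 
    (h : 0 < SS J n n ω f) : ∃ u v, u.length = n ∧ v.length = n ∧ ret J ω false u ∧ ret J ω true v ∧ 0 < f u v := by
  classical
  unfold SS at h
  rw [W] at h
  obtain ⟨u, hu, h1⟩ := Finset.exists_lt_of_sum_lt (s := words d M n) (f := fun _ => (0:ℝ)) (by simpa using h)
  split_ifs at h1 with hr
  · rw [W] at h1
    obtain ⟨v, hv, h2⟩ := Finset.exists_lt_of_sum_lt (s := words d M n) (f := fun _ => (0:ℝ)) (by simpa using h1)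
    split_ifs at h2 with hr2
    · exact ⟨u, v, mem_words.1 hu, mem_words.1 hv, hr, hr2, h2⟩
    · exact absurd h2 (lt_irrefl _)
  · exact absurd h1 (lt_irrefl _)

lemma propA {q : Idx d M → ℝ} {P : Measure (Om d M)} (h : IsB q P) (hd : 1 ≤ d) (hM : 2 ≤ M) {p₁ p₂ : ℝ}
    (hp₁1 : p₁ ≤ 1) (hp₂1 : p₂ ≤ 1) (hq1 : ∀ w, q (false, w) = p₁) (hq2 : ∀ w, q (true, w) = p₂)
    (hp₁ : (M : ℝ) ^ (-(d : ℤ)) < p₁) (hp₂ : (M : ℝ) ^ (-(d : ℤ)) < p₂)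
    (hprod : (M : ℝ) ^ (1 - 2 * (d : ℤ)) < p₁ * p₂) :
    ∃ c : ℝ≥0∞, 0 < c ∧ ∀ (i : Fin d) (Δ : Fin d → ℝ), 3 ≤ |Δ i| → (∀ l, |Δ l| ≤ |Δ i|) → c ≤ P (GG Δ) := by
  classical
  have hprob := h.prob
  have hM0 : (0 : ℝ) < M := by positivity
  have hD : (0 : ℝ) < (M : ℝ) ^ d := by positivity
  have hd0 : (1 : ℝ) ≤ d := by exact_mod_cast hd
  obtain ⟨β, γ₁, γ₂, hβ, hγ₁, hγ₁', hγ₂, hγ₂', hβ1, hβ2⟩ := exists_params hd hM hp₁ hp₂ hprod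
  have hp₁0 : 0 < p₁ := lt_trans (by positivity) hp₁
  have hp₂0 : 0 < p₂ := lt_trans (by positivity) hp₂
  have hp₁M : 1 ≤ p₁ * (M : ℝ) ^ d := by
    rw [zpow_neg, zpow_natCast, inv_lt_iff_one_lt_mul₀ hD] at hp₁
    linarith
  have h01 : ∀ i, 0 ≤ q i ∧ q i ≤ 1 := by
    rintro ⟨b, w⟩
    cases b
    · rw [hq1]; exact ⟨hp₁0.le, hp₁1⟩
    · rw [hq2]; exact ⟨hp₂0.le, hp₂1⟩
  have hqpos : ∀ i, 0 < q i := by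
    rintro ⟨b, w⟩
    cases b
    · rw [hq1]; exact hp₁0
    · rw [hq2]; exact hp₂0
  set Q := p₁ * p₂ with hQ
  have hQ0 : 0 < Q := by positivity
  obtain ⟨a, ha⟩ : ∃ a : ℝ, a = (1 / (24 * d) : ℝ) ^ (2 * d) / 8 := ⟨_, rfl⟩
  have ha0 : 0 < a := by rw [ha]; positivity
  obtain ⟨H, hHQ⟩ := exists_nat_ge (4 * ((M : ℝ) ^ d) ^ 2 / Q)
  have hHq : 4 * ((M : ℝ) ^ d) ^ 2 ≤ Q * H := by
    rw [div_le_iff₀ hQ0] at hHQ; linarith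
  have hH : 1 ≤ H := by
    rcases Nat.eq_zero_or_pos H with h0 | h0
    · exfalso
      rw [h0] at hHq
      have : (0 : ℝ) < 4 * ((M : ℝ) ^ d) ^ 2 := by positivity
      simp at hHq
      linarith
    · exact h0
  set e := a / (64 * exp 1) with he
  have he0 : 0 < e := by positivity
  set b : ℕ → ℝ := fun n => ((H : ℝ) ^ n + 1) * (2 * En d M e β n) with hb
  have hb0 : ∀ n, 0 ≤ b n := fun n => by simp only [hb]; unfold En; positivity
  have hbs : Summable b := summable_err hM hβ he0 hH
  have htail := tendsto_sum_nat_add b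
  have hev1 := htail.eventually_lt_const (u := 1 / 2) (by norm_num)
  have hev2 : ∀ᶠ n : ℕ in Filter.atTop, 16 * d * ((M : ℝ) ^ d) ^ 2 * (n + 2) ^ 2 ≤ a * Q * 4 ^ n := by
    have h1 := tendsto_pow_const_div_const_pow_of_one_lt 2 (r := (4 : ℝ)) (by norm_num)
    have h2 := (Filter.tendsto_add_atTop_iff_nat 2).2 h1
    have h3 := h2.eventually_lt_const (u := a * Q / (16 * (16 * d * ((M : ℝ) ^ d) ^ 2))) (by positivity)
    filter_upwards [h3] with n hn
    rw [div_lt_div_iff₀ (by positivity) (by positivity)] at hn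
    push_cast at hn
    rw [pow_add (4 : ℝ)] at hn
    nlinarith
  obtain ⟨J0, hJ0⟩ := Filter.eventually_atTop.1 hev2
  obtain ⟨J, hJt, hJJ0, hJ1⟩ := (hev1.and ((Filter.eventually_ge_atTop J0).and (Filter.eventually_ge_atTop 1))).exists
  have hbig : ∀ n, J ≤ n → 16 * d * ((M : ℝ) ^ d) ^ 2 * (n + 2) ^ 2 ≤ a * Q * 4 ^ n := 
    fun n hn => hJ0 n (hJJ0.trans hn)
  set S : Finset (Idx d M) := (finite_lens J).toFinset with hS
  refine ⟨P (tcyl S) * (1 / 2), ?_, ?_⟩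
  · rw [h.tcyl]
    refine ENNReal.mul_pos (Finset.prod_ne_zero_iff.2 fun i _ => ?_) (by simp)
    simp [hqpos i]
  intro i Δ h3 hmax
  set F : ℕ → ℕ → Set (Om d M) := fun n j => bad J n p₁ p₂ (a * Q ^ (n - J)) (1 / (4 * (n + 2) ^ 2)) 
      (phi i (gg i Δ (mesh Δ H n j))) with hF
  set Bad : Set (Om d M) := ⋃ n : ℕ, ⋃ j ∈ Finset.range (H ^ (n + J) + 1), F (n + J) j with hBad
  have hFm : ∀ n j, MeasurableSet (F n j) := fun n j => 
    measurableSet_setOfPred.2 ((bad_dep J n p₁ p₂ _ _ _).measurable_fin ((finite_lens (n+1)).subset fun i hi => hi.2))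
  have hBadm : MeasurableSet Bad := MeasurableSet.iUnion fun n => Finset.measurableSet_biUnion _ fun j _ => hFm _ _
  have hPbad : P Bad ≤ 1 / 2 := by
    calc P Bad ≤ ∑' n, P (⋃ j ∈ Finset.range (H ^ (n + J) + 1), F (n + J) j) := measure_iUnion_le _
      _ ≤ ∑' n, ENNReal.ofReal (b (n + J)) := by
        refine ENNReal.tsum_le_tsum fun n => ?_
        refine (measure_biUnion_finset_le _ _).trans ?_
        calc _ ≤ ∑ j ∈ Finset.range (H ^ (n + J) + 1), ENNReal.ofReal (2 * En d M e β (n + J)) := by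
              refine Finset.sum_le_sum fun j _ => ?_
              exact bad_prob h hd hM hp₁0 hp₂0 hp₁1 hp₂1 hq1 hq2 hβ hγ₁ hγ₁' hγ₂ hγ₂' hβ1 hβ2 hp₁M ha0 (by omega) (by omega)
                (isWt_phi hd hM i (measurable_gg i Δ _))
          _ = ENNReal.ofReal (b (n + J)) := by
              rw [Finset.sum_const, Finset.card_range, nsmul_eq_mul, hb]
              simp only
              rw [ENNReal.ofReal_mul (p := (H : ℝ) ^ (n + J) + 1) (by positivity)]
              congr 1
              rw [← ENNReal.ofReal_natCast]
              push_cast; rfl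
      _ = ENNReal.ofReal (∑' n, b (n + J)) := by
        rw [ENNReal.ofReal_tsum_of_nonneg (fun n => hb0 _) ((summable_nat_add_iff J).2 hbs)]
      _ ≤ ENNReal.ofReal (1 / 2) := ENNReal.ofReal_le_ofReal hJt.le
      _ = 1 / 2 := by rw [ENNReal.ofReal_div_of_pos (by norm_num)]; simp
  have hPgood : 1 / 2 ≤ P Badᶜ := by
    rw [prob_compl_eq_one_sub hBadm]
    refine le_trans ?_ (tsub_le_tsub_left hPbad 1)
    rw [one_div, ENNReal.one_sub_inv_two]
  have hindep := indep_fin_set h h01 S (tcyl S) Badᶜ ?_ ?_ hBadm.compl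
  · calc P (tcyl S) * (1 / 2) ≤ P (tcyl S) * P Badᶜ := by gcongr
      _ = P (tcyl S ∩ Badᶜ) := hindep.symm
      _ ≤ P (GG Δ) := measure_mono ?_
    rintro ω ⟨hω1, hω2⟩
    have hfull : ∀ i : Idx d M, i.2.1.length ≤ J → ω i = true := fun i hi => hω1 i (by simpa [hS] using hi)
    have hret : ∀ σ w, ret J ω σ w → ret 0 ω σ w := by
      intro σ w hw u hu hu0
      by_cases hJu : J < u.length
      · exact hw u hu hJu
      · have : u ≠ [] := by rintro rfl; simp at hu0
        simp only [lab, this, ne_eq, not_false_eq_true, dite_true]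
        exact hfull _ (by simpa using hJu)
    have hgood := good_induct (M := M) hd hM h3 hmax hp₁0 hp₂0 hp₁1 hp₂1 ha hH hHq hbig (ω := ω) ?_
    · have hκ : (0 : ℝ) < 1 / (24 * d) := by positivity
      set κ : ℝ := 1 / (24 * d) with hκd
      set rc := √(∑ l, Δ l ^ 2) with hrc
      obtain ⟨x, hx1, hx2⟩ := exists_rat_btwn (show rc - κ < rc by linarith)
      obtain ⟨y, hy1, hy2⟩ := exists_rat_btwn (show rc < rc + κ by linarith)
      have hII : ∀ r : ℝ, x ≤ r → r ≤ y → r ∈ II Δ := by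
        intro r h1 h2
        simp only [II, mem_ofPred_eq, abs_le]
        rw [← hκd, ← hrc]
        constructor <;> linarith
      have hxy : (x : ℝ) < y := hx2.trans hy1
      refine ⟨x, y, ?_, by exact_mod_cast hxy, J, ?_⟩
      · have := (II_bounds hd h3 hmax (hII x le_rfl hxy.le)).1
        exact_mod_cast this
      · intro n hn r hr1 hr2
        have hr1 : (x : ℝ) < r := by exact_mod_cast hr1
        have hr2 : (r : ℝ) < y := by exact_mod_cast hr2
        have hpos : 0 < SS J n n ω (phi i (gg i Δ r)) := lt_of_lt_of_le (by positivity) (hgood n hn r (hII r hr1.le hr2.le))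
        obtain ⟨u, v, hu, hv, hru, hrv, hφ⟩ := SS_pos hpos
        exact ⟨u, v, hu, hv, hret _ _ hru, hret _ _ hrv, touch_of_phi hM i Δ h3 hφ⟩
    · intro n hn j hj hmem
      apply hω2
      rw [hBad]
      obtain ⟨m, rfl⟩ := Nat.exists_eq_add_of_le' hn
      exact mem_iUnion.2 ⟨m, mem_biUnion (Finset.mem_coe.2 (Finset.mem_range.2 (by omega))) hmem⟩
  · intro x y hxy
    simp only [tcyl, mem_ofPred_eq, eq_iff_iff]
    refine forall₂_congr fun i hi => ?_
    rw [hxy i hi]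
  · intro x y hxy
    simp only [mem_compl_iff, eq_iff_iff, hBad, mem_iUnion, not_exists]
    refine forall_congr' fun n => forall₂_congr fun j _ => ?_
    have := bad_dep J (n + J) p₁ p₂ (a * Q ^ (n + J - J)) (1 / (4 * ((n + J : ℕ) + 2) ^ 2)) 
      (phi i (gg i Δ (mesh Δ H (n + J) j))) (x := x) (y := y) (fun k hk => hxy k (by simpa [hS] using hk.1))
    simp only [eq_iff_iff] at this
    exact not_congr this

end propA
end

noncomputable section

/-! ## Shifts and the zero-one law -/

section shift
variable {d M : ℕ}

/-- shift of coordinates -/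
def shi (t : Bool → List (Alpha d M)) (i : Idx d M) : Idx d M :=
  (i.1, ⟨t i.1 ++ i.2.1, by simp [i.2.2]⟩)

/-- the shifted configuration -/
def sh (t : Bool → List (Alpha d M)) (ω : Om d M) : Om d M := fun i => ω (shi t i)

lemma shi_inj (t : Bool → List (Alpha d M)) : Function.Injective (shi t) := by
  rintro ⟨b, u, hu⟩ ⟨c, v, hv⟩ h
  simp only [shi, Prod.mk.injEq, Subtype.mk.injEq] at h
  obtain ⟨rfl, h⟩ := h
  have := List.append_cancel_left h
  subst this
  rfl

lemma measurable_sh (t : Bool → List (Alpha d M)) : Measurable (sh t) :=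
  measurable_pi_lambda _ fun i => measurable_pi_apply (shi t i)

lemma map_sh {q : Idx d M → ℝ} {P : Measure (Om d M)} (h : IsB q P) {p₁ p₂ : ℝ}
    (hq1 : ∀ w, q (false, w) = p₁) (hq2 : ∀ w, q (true, w) = p₂) (t : Bool → List (Alpha d M)) :
    P.map (sh t) = P := by
  classical
  have := h.prob
  have : IsProbabilityMeasure (P.map (sh t)) := Measure.isProbabilityMeasure_map (measurable_sh t).aemeasurable
  refine tcyl_ext fun S => ?_
  rw [Measure.map_apply (measurable_sh t) (measurableSet_tcyl S)]
  have e : sh t ⁻¹' tcyl S = tcyl (S.image (shi t)) := by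
    ext ω
    simp only [tcyl, sh, mem_preimage, mem_ofPred_eq, Finset.forall_mem_image]
  rw [e, h.tcyl, h.tcyl, Finset.prod_image (fun x _ y _ hxy => shi_inj t hxy)]
  refine Finset.prod_congr rfl fun i _ => ?_
  congr 1
  obtain ⟨b, w⟩ := i
  cases b
  · simp only [shi, hq1]
  · simp only [shi, hq2]

lemma lab_sh (t : Bool → List (Alpha d M)) (ω : Om d M) (σ : Bool) (u : List (Alpha d M)) (hu : u ≠ []) :
    lab (sh t ω) σ u = lab ω σ (t σ ++ u) := by
  have : t σ ++ u ≠ [] := by simp [hu]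
  simp [lab, hu, sh, shi]

lemma ret_sh (t : Bool → List (Alpha d M)) (ω : Om d M) (σ : Bool) (u : List (Alpha d M))
    (h1 : ret 0 ω σ (t σ)) (h2 : ret 0 (sh t ω) σ u) : ret 0 ω σ (t σ ++ u) := by
  intro w hw hlen
  rcases List.prefix_or_prefix_of_prefix hw (List.prefix_append (t σ) u) with h | h
  · exact h1 w h hlen
  · obtain ⟨v, rfl⟩ := h
    by_cases hv : v = []
    · subst hv
      exact h1 _ (by simp) hlen
    · rw [← lab_sh t ω σ v hv]
      exact h2 v ((List.prefix_append_right_inj _).1 hw) (List.length_pos_iff.2 hv)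

lemma cube_scale (hM : 2 ≤ M) (w u : List (Alpha d M)) (x : EuclideanSpace ℝ (Fin d)) (hx : x ∈ wordCube d M u) :
    ∃ x' ∈ wordCube d M (w ++ u), ∀ l, x' l = wordBase d M w l + ((M : ℝ)⁻¹) ^ w.length * x l := by
  refine ⟨WithLp.toLp 2 fun l => wordBase d M w l + ((M : ℝ)⁻¹) ^ w.length * x l, ?_, fun l => rfl⟩
  intro l
  have hl := hx l
  have hpos : (0 : ℝ) < ((M : ℝ)⁻¹) ^ w.length := by positivity
  rw [wordBase_append _ _ _ hM]
  have e : (M : ℝ) ^ (-((w ++ u).length : ℤ)) = ((M : ℝ)⁻¹) ^ w.length * (M : ℝ) ^ (-(u.length : ℤ)) := by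
    rw [zpow_neg, zpow_neg, zpow_natCast, zpow_natCast, List.length_append, pow_add, mul_inv, inv_pow]
  rw [e]
  constructor <;> nlinarith [hl.1, hl.2]

lemma touch_scale (hM : 2 ≤ M) {k : ℕ} (w w' u v : List (Alpha d M)) (hw : w.length = k) (hw' : w'.length = k)
    (Δ : Fin d → ℝ) (hΔ : ∀ l, Δ l = (M : ℝ) ^ k * (wordBase d M w l - wordBase d M w' l)) {r : ℝ}
    (h : Touch Δ r u v) : Touch 0 (r * ((M : ℝ)⁻¹) ^ k) (w ++ u) (w' ++ v) := by
  obtain ⟨x, hx, y, hy, he⟩ := h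
  obtain ⟨x', hx', hx2⟩ := cube_scale hM w u x hx
  obtain ⟨y', hy', hy2⟩ := cube_scale hM w' v y hy
  refine ⟨x', hx', y', hy', ?_⟩
  rw [mul_pow, ← he, Finset.sum_mul]
  refine Finset.sum_congr rfl fun l _ => ?_
  have hM0 : (M : ℝ) ≠ 0 := by positivity
  rw [← mul_pow]
  congr 1
  rw [hx2, hy2, hΔ, hw, hw', inv_pow]
  simp only [Pi.zero_apply]
  field_simp
  ring

lemma GG_of_sh (hM : 2 ≤ M) {k : ℕ} (t : Bool → List (Alpha d M)) (ht : ∀ σ, (t σ).length = k)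
    (Δ : Fin d → ℝ) (hΔ : ∀ l, Δ l = (M : ℝ) ^ k * (wordBase d M (t false) l - wordBase d M (t true) l))
    {ω : Om d M} (h1 : ret 0 ω false (t false)) (h2 : ret 0 ω true (t true)) (h : sh t ω ∈ GG Δ) : ω ∈ GG (M := M) (0 : Fin d → ℝ) := by
  obtain ⟨a, b, ha, hab, N, hN⟩ := h
  have hMk : (0 : ℚ) < (M : ℚ) ^ k := by positivity
  have hMk' : (M : ℝ) ^ k ≠ 0 := by positivity
  refine ⟨a / (M : ℚ) ^ k, b / (M : ℚ) ^ k, by positivity, by gcongr, N + k, fun n hn r hr1 hr2 => ?_⟩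
  rw [div_lt_iff₀ hMk] at hr1
  rw [lt_div_iff₀ hMk] at hr2
  obtain ⟨u, v, hu, hv, hru, hrv, hT⟩ := hN (n - k) (by omega) (r * (M : ℚ) ^ k) hr1 hr2
  refine ⟨t false ++ u, t true ++ v, by simp [ht, hu]; omega, by simp [ht, hv]; omega, ret_sh t ω _ _ h1 hru, ret_sh t ω _ _ h2 hrv, ?_⟩
  have := touch_scale hM (t false) (t true) u v (ht _) (ht _) Δ hΔ hT
  convert this using 1
  push_cast
  rw [inv_pow]
  field_simp

end shift
end

noncomputable section

section zeroone
variable {d M : ℕ}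

lemma exists_ext (hd : 1 ≤ d) (hM : 2 ≤ M) {k : ℕ} (u v : List (Alpha d M)) (hu : u.length = k) (hv : v.length = k) :
    ∃ s s' : Alpha d M, ∃ i : Fin d, ∃ Δ : Fin d → ℝ, 
      (∀ l, Δ l = (M : ℝ) ^ (k + 2) * (wordBase d M (u ++ [s] ++ [s]) l - wordBase d M (v ++ [s'] ++ [s']) l)) ∧
      3 ≤ |Δ i| ∧ ∀ l, |Δ l| ≤ |Δ i| := by
  have hM0 : (M : ℝ) ≠ 0 := by positivity
  have hM2 : (2 : ℝ) ≤ M := by exact_mod_cast hM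
  have : Nonempty (Fin d) := ⟨⟨0, hd⟩⟩
  let D : Fin d → ℝ := fun l => (M : ℝ) ^ k * (wordBase d M u l - wordBase d M v l)
  obtain ⟨i, hi⟩ := Finite.exists_max (fun l => |D l|)
  let e : Alpha d M := fun l => if l = i then ⟨M - 1, by omega⟩ else ⟨0, by omega⟩
  let z : Alpha d M := fun l => ⟨0, by omega⟩
  have hei : ((e i : ℕ) : ℝ) = M - 1 := by
    simp only [e, if_true]
    rw [Nat.cast_sub (by omega)]; simp
  have hel (l) (h : l ≠ i) : ((e l : ℕ) : ℝ) = 0 := by simp [e, h]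
  have hz (l) : ((z l : ℕ) : ℝ) = 0 := by simp [z]
  have key (s s' : Alpha d M) (l : Fin d) : 
      (M : ℝ) ^ (k + 2) * (wordBase d M (u ++ [s] ++ [s]) l - wordBase d M (v ++ [s'] ++ [s']) l) = 
        M ^ 2 * D l + (M + 1) * (((s l : ℕ) : ℝ) - ((s' l : ℕ) : ℝ)) := by
    simp only [wordBase_snoc _ _ _ hM, List.length_append, List.length_singleton, hu, hv, D, inv_pow]
    field_simp
    ring
  have hMsq : (4 : ℝ) ≤ (M : ℝ) ^ 2 := by nlinarith
  rcases le_or_gt 0 (D i) with h0 | h0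
  · refine ⟨e, z, i, _, fun l => rfl, ?_, fun l => ?_⟩
    · have h1 := mul_nonneg (sq_nonneg (M : ℝ)) h0
      rw [key, hei, hz i]
      exact le_trans (by nlinarith) (le_abs_self _)
    · rw [key, key, hei]
      simp only [hz]
      by_cases hl : l = i
      · subst hl; rw [hei]
      · rw [hel l hl]
        have := hi l
        rw [abs_of_nonneg h0] at this
        rw [abs_of_nonneg (a := _ + _ * (_ - 1 - 0)) (by nlinarith), sub_zero, mul_zero, add_zero, abs_mul, abs_of_nonneg (by positivity)]
        nlinarith
  · refine ⟨z, e, i, _, fun l => rfl, ?_, fun l => ?_⟩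
    · have h1 := mul_nonneg (sq_nonneg (M : ℝ)) (neg_nonneg.2 h0.le)
      rw [key, hei, hz i]
      exact le_trans (by nlinarith) (neg_le_abs _)
    · rw [key, key, hei]
      simp only [hz]
      by_cases hl : l = i
      · subst hl; rw [hei]
      · rw [hel l hl]
        have := hi l
        rw [abs_of_neg h0] at this
        rw [abs_of_nonpos (a := _ + _ * (0 - (_ - 1))) (by nlinarith), sub_zero, mul_zero, add_zero, abs_mul, abs_of_nonneg (by positivity)]
        nlinarith

lemma B1 {q : Idx d M → ℝ} {P : Measure (Om d M)} (h : IsB q P) (hd : 1 ≤ d) (hM : 2 ≤ M) {p₁ p₂ : ℝ}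
    (hp₁0 : 0 < p₁) (hp₂0 : 0 < p₂)
    (hp₁1 : p₁ ≤ 1) (hp₂1 : p₂ ≤ 1) (hq1 : ∀ w, q (false, w) = p₁) (hq2 : ∀ w, q (true, w) = p₂)
    {c : ℝ≥0∞} (hc : ∀ (i : Fin d) (Δ : Fin d → ℝ), 3 ≤ |Δ i| → (∀ l, |Δ l| ≤ |Δ i|) → c ≤ P (GG Δ))
    {k : ℕ} (u v : List (Alpha d M)) (hu : u.length = k) (hv : v.length = k) (A : Set (Om d M)) 
    (hA : DependsOn (fun ω => ω ∈ A) {i | i.2.1.length ≤ k}) (hAr : ∀ ω ∈ A, ret 0 ω false u ∧ ret 0 ω true v) :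
    ENNReal.ofReal (min p₁ p₂) ^ 4 * c * P A ≤ P (A ∩ GG 0) := by
  classical
  have h01 : ∀ i, 0 ≤ q i ∧ q i ≤ 1 := by
    rintro ⟨b, w⟩; cases b
    · rw [hq1]; exact ⟨hp₁0.le, hp₁1⟩
    · rw [hq2]; exact ⟨hp₂0.le, hp₂1⟩
  obtain ⟨s, s', i, Δ, hΔ, h3, hmax⟩ := exists_ext hd hM u v hu hv
  let t : Bool → List (Alpha d M) := fun σ => if σ then v ++ [s'] ++ [s'] else u ++ [s] ++ [s]
  have ht : ∀ σ, (t σ).length = k + 2 := by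
    intro σ; cases σ <;> simp [t, hu, hv]
  let S4 : Finset (Idx d M) := {(false, ⟨u ++ [s], by simp⟩), (false, ⟨u ++ [s] ++ [s], by simp⟩), 
    (true, ⟨v ++ [s'], by simp⟩), (true, ⟨v ++ [s'] ++ [s'], by simp⟩)}
  have hS4 : ∀ i ∈ S4, k < i.2.1.length ∧ i.2.1.length ≤ k + 2 := by
    intro i hi
    simp only [S4, Finset.mem_insert, Finset.mem_singleton] at hi
    rcases hi with rfl | rfl | rfl | rfl <;> simp [hu, hv]
  have htc (s : Set (Idx d M)) (hs : ↑S4 ⊆ s) : DependsOn (fun ω : Om d M => ω ∈ tcyl S4) s := by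
    intro x y hxy
    simp only [tcyl, mem_ofPred_eq, eq_iff_iff]
    exact forall₂_congr fun i hi => by rw [hxy i (hs hi)]
  have i1 : P (A ∩ tcyl S4) = P A * P (tcyl S4) := by
    refine indep_fin_set h h01 (finite_lens k).toFinset A (tcyl S4) ?_ ?_ (measurableSet_tcyl _)
    · simpa using hA
    · refine htc _ fun i hi => ?_
      have := (hS4 i hi).1
      simpa using this
  have i2 : P ((A ∩ tcyl S4) ∩ sh t ⁻¹' GG Δ) = P (A ∩ tcyl S4) * P (sh t ⁻¹' GG Δ) := by
    refine indep_fin_set h h01 (finite_lens (k + 2)).toFinset (A ∩ tcyl S4) _ ?_ ?_ (measurable_sh t (measurableSet_GG Δ))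
    · intro x y hxy
      have e1 := hA (x := x) (y := y) (fun i hi => hxy i (by simp only [Finite.coe_toFinset, mem_ofPred_eq] at hi ⊢; omega))
      have e2 := htc (↑S4) subset_rfl (x := x) (y := y) (fun i hi => hxy i (by 
        simp only [Finite.coe_toFinset, mem_ofPred_eq]; exact (hS4 i hi).2))
      simp only [eq_iff_iff] at e1 e2
      simp only [mem_inter_iff, e1, e2]
    · intro x y hxy
      have : sh t x = sh t y := by
        funext i
        refine hxy _ ?_
        have := ht i.1
        have h2 := List.length_pos_iff.2 i.2.2
        simp [shi]
        omega
      simp only [mem_preimage, this]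
  have i3 : c ≤ P (sh t ⁻¹' GG Δ) := by
    rw [← Measure.map_apply (measurable_sh t) (measurableSet_GG Δ), map_sh h hq1 hq2]
    exact hc i Δ h3 hmax
  have i4 : ENNReal.ofReal (min p₁ p₂) ^ 4 ≤ P (tcyl S4) := by
    rw [h.tcyl]
    calc ENNReal.ofReal (min p₁ p₂) ^ 4 ≤ ENNReal.ofReal (min p₁ p₂) ^ S4.card := by
          refine pow_le_pow_right_of_le_one' ?_ Finset.card_le_four
          rw [ENNReal.ofReal_le_one]; exact (min_le_left _ _).trans hp₁1
      _ ≤ _ := by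
          refine Finset.pow_card_le_prod _ _ _ fun i _ => ENNReal.ofReal_le_ofReal ?_
          obtain ⟨b, w⟩ := i
          cases b
          · rw [hq1]; exact min_le_left _ _
          · rw [hq2]; exact min_le_right _ _
  calc ENNReal.ofReal (min p₁ p₂) ^ 4 * c * P A ≤ P (tcyl S4) * P (sh t ⁻¹' GG Δ) * P A := by gcongr
    _ = P ((A ∩ tcyl S4) ∩ sh t ⁻¹' GG Δ) := by rw [i2, i1]; ring
    _ ≤ _ := by
      refine measure_mono ?_
      rintro ω ⟨⟨hωA, hω4⟩, hω⟩
      refine ⟨hωA, GG_of_sh hM t ht Δ hΔ ?_ ?_ hω⟩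
      · have hr := (hAr ω hωA).1
        simp only [t]
        exact (ret_succ (by simp)).2 ⟨(ret_succ (by simp)).2 ⟨hr, hω4 _ (by simp [S4])⟩, hω4 _ (by simp [S4])⟩
      · have hr := (hAr ω hωA).2
        simp only [t]
        exact (ret_succ (by simp)).2 ⟨(ret_succ (by simp)).2 ⟨hr, hω4 _ (by simp [S4])⟩, hω4 _ (by simp [S4])⟩

/-- both percolations survive to level `k` -/
def alive (d M : ℕ) (k : ℕ) : Set (Om d M) := 
  {ω | ∃ x ∈ (words d M k) ×ˢ (words d M k), ret 0 ω false x.1 ∧ ret 0 ω true x.2}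

lemma R_dep {k : ℕ} (x : List (Alpha d M) × List (Alpha d M)) (hx : x ∈ (words d M k) ×ˢ (words d M k)) : 
    DependsOn (fun ω : Om d M => ret 0 ω false x.1 ∧ ret 0 ω true x.2) {i | i.2.1.length ≤ k} := by
  rw [Finset.mem_product, mem_words, mem_words] at hx
  intro ω η hxy
  have h1 := ret_dep (d := d) (M := M) 0 false x.1 (s := {i | i.2.1.length ≤ k}) (fun w hw hl _ => by simpa using hl.trans hx.1.le) hxy
  have h2 := ret_dep (d := d) (M := M) 0 true x.2 (s := {i | i.2.1.length ≤ k}) (fun w hw hl _ => by simpa using hl.trans hx.2.le) hxy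
  simp only at h1 h2
  simp only [h1, h2]

lemma alive_dep (k : ℕ) : DependsOn (fun ω : Om d M => ω ∈ alive d M k) {i | i.2.1.length ≤ k} := by
  intro ω η hxy
  simp only [alive, mem_ofPred_eq, eq_iff_iff]
  refine exists_congr fun x => and_congr_right fun hx => ?_
  have := R_dep x hx hxy
  simpa using this

lemma meas_dep {A : Set (Om d M)} {k : ℕ} (hA : DependsOn (fun ω => ω ∈ A) {i | i.2.1.length ≤ k}) : MeasurableSet A :=
  measurableSet_setOfPred.2 (hA.measurable_fin (finite_lens k))

lemma B2 {P : Measure (Om d M)} {c : ℝ≥0∞} {k : ℕ}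
    (hB : ∀ (u v : List (Alpha d M)), u.length = k → v.length = k → ∀ A : Set (Om d M),
      DependsOn (fun ω => ω ∈ A) {i | i.2.1.length ≤ k} → (∀ ω ∈ A, ret 0 ω false u ∧ ret 0 ω true v) → c * P A ≤ P (A ∩ GG 0))
    (A : Set (Om d M)) (hA : DependsOn (fun ω => ω ∈ A) {i | i.2.1.length ≤ k}) :
    c * P (A ∩ alive d M k) ≤ P (A ∩ alive d M k ∩ GG 0) := by
  classical
  have key (T : Finset (List (Alpha d M) × List (Alpha d M))) (hT : T ⊆ (words d M k) ×ˢ (words d M k)) :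
      ∀ A : Set (Om d M), DependsOn (fun ω => ω ∈ A) {i | i.2.1.length ≤ k} → 
      c * P (A ∩ {ω | ∃ x ∈ T, ret 0 ω false x.1 ∧ ret 0 ω true x.2}) ≤ 
        P (A ∩ {ω | ∃ x ∈ T, ret 0 ω false x.1 ∧ ret 0 ω true x.2} ∩ GG 0) := by
    induction T using Finset.induction_on with
    | empty => intro A hA; simp
    | insert x T hx ih =>
      intro A hA
      have hxm := hT (Finset.mem_insert_self _ _)
      have hR := R_dep x hxm
      set R : Set (Om d M) := {ω | ret 0 ω false x.1 ∧ ret 0 ω true x.2} with hRdef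
      have hRm : MeasurableSet R := meas_dep (k := k) (by exact hR)
      set Y : Set (Om d M) := {ω | ∃ y ∈ insert x T, ret 0 ω false y.1 ∧ ret 0 ω true y.2} with hY
      set Z : Set (Om d M) := {ω | ∃ x ∈ T, ret 0 ω false x.1 ∧ ret 0 ω true x.2} with hZ
      have hYZ : ∀ ω, ω ∈ Y ↔ ω ∈ R ∨ ω ∈ Z := by
        intro ω
        simp only [hY, hZ, hRdef, mem_ofPred_eq, Finset.exists_mem_insert]
      have e1 (G : Set (Om d M)) : A ∩ Y ∩ G ∩ R = A ∩ R ∩ G := by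
        ext ω; simp only [mem_inter_iff, hYZ]; tauto
      have e2 (G : Set (Om d M)) : (A ∩ Y ∩ G) \ R = (A ∩ Rᶜ) ∩ Z ∩ G := by
        ext ω; simp only [mem_inter_iff, hYZ, mem_sdiff, mem_compl_iff]; tauto
      have hw := Finset.mem_product.1 hxm
      rw [mem_words, mem_words] at hw
      have a1 := hB x.1 x.2 hw.1 hw.2 (A ∩ R) (by
        intro ω η hxy
        have f1 := hA hxy
        have f2 := hR hxy
        simp only at f1 f2
        simp only [mem_inter_iff, f1, hRdef, mem_ofPred_eq, f2]) (fun ω hω => hω.2)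
      have a2 := ih (fun y hy => hT (Finset.mem_insert_of_mem hy)) (A ∩ Rᶜ) (by
        intro ω η hxy
        have f1 := hA hxy
        have f2 := hR hxy
        simp only at f1 f2
        simp only [mem_inter_iff, f1, hRdef, mem_compl_iff, mem_ofPred_eq, f2])
      have s1 := measure_inter_add_sdiff (μ := P) (A ∩ Y ∩ univ) hRm
      have s2 := measure_inter_add_sdiff (μ := P) (A ∩ Y ∩ GG 0) hRm
      rw [e1, e2] at s1 s2
      simp only [inter_univ] at s1
      rw [← s1, ← s2, mul_add]
      exact add_le_add a1 a2
  exact key _ subset_rfl A hA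

lemma B3 {P : Measure (Om d M)} [IsProbabilityMeasure P] {c : ℝ≥0∞} (hc0 : 0 < c) (hc1 : c ≤ 1)
    (hB : ∀ k, ∀ (A : Set (Om d M)), DependsOn (fun ω => ω ∈ A) {i | i.2.1.length ≤ k} → 
      c * P (A ∩ alive d M k) ≤ P (A ∩ alive d M k ∩ GG 0)) :
    P ((⋂ k, alive d M k) \ GG 0) = 0 := by
  classical
  set B : Set (Om d M) := (⋂ k, alive d M k) \ GG 0 with hBdef
  have hBm : MeasurableSet B := (MeasurableSet.iInter fun k => meas_dep (alive_dep k)).diff (measurableSet_GG 0)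
  let C : Set (Set (Om d M)) := {A | ∃ k, DependsOn (fun ω => ω ∈ A) {i : Idx d M | i.2.1.length ≤ k}}
  have mono {A : Set (Om d M)} {k l : ℕ} (hkl : k ≤ l) (hA : DependsOn (fun ω => ω ∈ A) {i : Idx d M | i.2.1.length ≤ k}) :
      DependsOn (fun ω => ω ∈ A) {i : Idx d M | i.2.1.length ≤ l} := 
    fun x y hxy => hA (fun i hi => hxy i (le_trans (by exact hi) hkl))
  have hC : IsSetRing C := by
    refine ⟨⟨0, fun x y _ => by simp⟩, ?_, ?_⟩
    · rintro s t ⟨k, hk⟩ ⟨l, hl⟩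
      refine ⟨max k l, fun x y hxy => ?_⟩
      have f1 := mono (le_max_left k l) hk hxy
      have f2 := mono (le_max_right k l) hl hxy
      simp only at f1 f2
      simp only [mem_union, f1, f2]
    · rintro s t ⟨k, hk⟩ ⟨l, hl⟩
      refine ⟨max k l, fun x y hxy => ?_⟩
      have f1 := mono (le_max_left k l) hk hxy
      have f2 := mono (le_max_right k l) hl hxy
      simp only at f1 f2
      simp only [mem_sdiff, f1, f2]
  have hgen : (MeasurableSpace.pi : MeasurableSpace (Om d M)) = MeasurableSpace.generateFrom C := by
    apply le_antisymm
    · rw [generate_tcyl]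
      refine MeasurableSpace.generateFrom_mono ?_
      rintro _ ⟨S, rfl⟩
      refine ⟨S.sup (fun i => i.2.1.length), fun x y hxy => ?_⟩
      simp only [tcyl, mem_ofPred_eq, eq_iff_iff]
      exact forall₂_congr fun i hi => by
        rw [hxy i (Finset.le_sup (f := fun i : Idx d M => i.2.1.length) hi)]
    · refine MeasurableSpace.generateFrom_le ?_
      rintro A ⟨k, hk⟩
      exact meas_dep hk
  have hle : ∀ ε : ℝ≥0∞, 0 < ε → c * P B ≤ 2 * ε := by
    intro ε hε
    obtain ⟨A, ⟨k, hk⟩, hA⟩ := exists_measure_symmDiff_lt_of_generateFrom_isSetRing (μ := P) hC 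
      ⟨{univ}, countable_singleton _, by rintro _ rfl; exact ⟨0, fun x y _ => by simp⟩, by simp⟩ hgen hBm hε
    have h1 : P B ≤ P (A ∩ alive d M k) + ε := by
      calc P B ≤ P ((A ∩ alive d M k) ∪ symmDiff A B) := by
            refine measure_mono fun ω hω => ?_
            by_cases hωA : ω ∈ A
            · exact Or.inl ⟨hωA, mem_iInter.1 hω.1 k⟩
            · exact Or.inr (Or.inr ⟨hω, hωA⟩)
        _ ≤ _ := (measure_union_le _ _).trans (by gcongr)
    have h2 : P (A ∩ alive d M k ∩ GG 0) ≤ ε := by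
      refine (measure_mono ?_).trans hA.le
      rintro ω ⟨⟨h1, _⟩, h3⟩
      exact Or.inl ⟨h1, fun hωB => hωB.2 h3⟩
    calc c * P B ≤ c * (P (A ∩ alive d M k) + ε) := by gcongr
      _ = c * P (A ∩ alive d M k) + c * ε := mul_add _ _ _
      _ ≤ ε + c * ε := by gcongr; exact (hB k A hk).trans h2
      _ ≤ ε + 1 * ε := by gcongr
      _ = _ := by ring
  have hct : c * P B = 0 := by
    by_contra hne
    have hx : c * P B ≠ ⊤ := ENNReal.mul_ne_top (hc1.trans_lt ENNReal.one_lt_top).ne (measure_ne_top _ _)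
    have h1 := hle (c * P B / 2 / 2) (by simp only [ENNReal.div_pos_iff]; simp [hne])
    rw [ENNReal.mul_div_cancel (by simp) (by simp)] at h1
    exact absurd (ENNReal.half_lt_self hne hx) (not_lt.2 h1)
  rcases mul_eq_zero.1 hct with h | h
  · exact absurd h hc0.ne'
  · exact h

end zeroone
end

noncomputable section

/-! ## Back to the original setting -/

section final
variable {d M : ℕ}

/-- joint configuration -/
def ee (ω : PercSpace d M × PercSpace d M) : Om d M := fun i => if i.1 = true then ω.2 i.2 else ω.1 i.2

lemma measurable_ee : Measurable (ee (d := d) (M := M)) := by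
  refine measurable_pi_lambda _ fun i => ?_
  obtain ⟨b, w⟩ := i
  cases b
  · simp only [ee]
    exact (measurable_pi_apply w).comp measurable_fst
  · simp only [ee]
    exact (measurable_pi_apply w).comp measurable_snd

lemma isB_ee {p₁ p₂ : ℝ} {P : Measure (PercSpace d M × PercSpace d M)}
    (hP : IsIndepBernoulliPair d M p₁ p₂ P) : IsB (fun i : Idx d M => if i.1 = true then p₂ else p₁) (P.map ee) := by
  classical
  have := hP.1
  refine ⟨Measure.isProbabilityMeasure_map measurable_ee.aemeasurable, fun S => ?_⟩
  have hm := measurableSet_tcyl S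
  unfold tcyl at hm
  rw [Measure.map_apply measurable_ee hm]
  have key := hP.2 ((S.filter (fun i => ¬ i.1 = true)).image Prod.snd) ((S.filter (fun i => i.1 = true)).image Prod.snd)
    (fun _ => true) (fun _ => true)
  simp only [if_true] at key
  rw [Finset.prod_image, Finset.prod_image] at key
  · rw [← Finset.prod_filter_mul_prod_filter_not S (fun i => i.1 = true), mul_comm]
    have e1 : ∏ i ∈ S.filter (fun i => ¬ i.1 = true), ENNReal.ofReal (if i.1 = true then p₂ else p₁) = 
        ∏ i ∈ S.filter (fun i => ¬ i.1 = true), ENNReal.ofReal p₁ := 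
      Finset.prod_congr rfl fun i hi => by rw [if_neg (Finset.mem_filter.1 hi).2]
    have e2 : ∏ i ∈ S.filter (fun i => i.1 = true), ENNReal.ofReal (if i.1 = true then p₂ else p₁) = 
        ∏ i ∈ S.filter (fun i => i.1 = true), ENNReal.ofReal p₂ := 
      Finset.prod_congr rfl fun i hi => by rw [if_pos (Finset.mem_filter.1 hi).2]
    rw [e1, e2, ← key]
    congr 1
    ext ω
    simp only [mem_preimage, mem_ofPred_eq, Finset.forall_mem_image, Finset.mem_filter, and_imp, ee]
    constructor
    · intro h
      refine ⟨fun i hi hb => ?_, fun i hi hb => ?_⟩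
      · have := h i hi
        rwa [if_neg hb] at this
      · have := h i hi
        rwa [if_pos hb] at this
    · rintro ⟨h1, h2⟩ i hi
      split_ifs with hb
      · exact h2 hi hb
      · exact h1 hi hb
  · rintro ⟨b, w⟩ hx ⟨b', w'⟩ hy hxy
    simp only [Finset.coe_filter, mem_ofPred_eq] at hx hy hxy
    rw [hx.2, hy.2, hxy]
  · rintro ⟨b, w⟩ hx ⟨b', w'⟩ hy hxy
    simp only [Finset.coe_filter, mem_ofPred_eq, Bool.not_eq_true] at hx hy hxy
    rw [hx.2, hy.2, hxy]

lemma ret_ee_false (ω : PercSpace d M × PercSpace d M) (w : List (Alpha d M)) :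
    ret 0 (ee ω) false w ↔ Retained d M ω.1 w := by
  constructor
  · intro h u hu hw
    have := h u hw (List.length_pos_iff.2 hu)
    simpa [lab, hu, ee] using this
  · intro h u hw hl
    have hu := List.length_pos_iff.1 hl
    have := h u hu hw
    simpa [lab, hu, ee] using this

lemma ret_ee_true (ω : PercSpace d M × PercSpace d M) (w : List (Alpha d M)) :
    ret 0 (ee ω) true w ↔ Retained d M ω.2 w := by
  constructor
  · intro h u hu hw
    have := h u hw (List.length_pos_iff.2 hu)
    simpa [lab, hu, ee] using this
  · intro h u hw hl
    have hu := List.length_pos_iff.1 hl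
    have := h u hu hw
    simpa [lab, hu, ee] using this

lemma exists_retained {ω : PercSpace d M} (h : percLimit d M ω ≠ ∅) (k : ℕ) : 
    ∃ w : List (Alpha d M), w.length = k ∧ Retained d M ω w := by
  obtain ⟨x, hx⟩ := nonempty_iff_ne_empty.2 h
  rcases Nat.eq_zero_or_pos k with rfl | hk
  · refine ⟨[], rfl, fun u hu hw => ?_⟩
    simp only [List.prefix_nil] at hw
    exact absurd hw hu
  · have := mem_iInter₂.1 hx k hk
    obtain ⟨w, hw, _⟩ := mem_iUnion₂.1 this
    exact ⟨w, hw⟩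

lemma alive_ee {ω : PercSpace d M × PercSpace d M} (h1 : percLimit d M ω.1 ≠ ∅) (h2 : percLimit d M ω.2 ≠ ∅) (k : ℕ) :
    ee ω ∈ alive d M k := by
  obtain ⟨u, hu, hur⟩ := exists_retained h1 k
  obtain ⟨v, hv, hvr⟩ := exists_retained h2 k
  exact ⟨(u, v), Finset.mem_product.2 ⟨mem_words.2 hu, mem_words.2 hv⟩, (ret_ee_false _ _).2 hur, (ret_ee_true _ _).2 hvr⟩

lemma wordCube_compact (w : List (Alpha d M)) : IsCompact (wordCube d M w) := by
  have h1 : IsCompact ((WithLp.toLp 2 : (Fin d → ℝ) → EuclideanSpace ℝ (Fin d)) '' 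
      (Set.pi univ fun i => Icc (wordBase d M w i) (wordBase d M w i + (M : ℝ) ^ (-(w.length : ℤ))))) :=
    (isCompact_univ_pi fun i => isCompact_Icc).image (PiLp.continuous_toLp 2 _)
  convert h1 using 1
  ext x
  constructor
  · intro hx
    exact ⟨fun i => x i, fun i _ => hx i, rfl⟩
  · rintro ⟨y, hy, rfl⟩ i
    exact hy i (mem_univ _)

lemma approx_compact (ω : PercSpace d M) (n : ℕ) : IsCompact (approx d M ω n) := by
  unfold approx
  refine Set.Finite.isCompact_biUnion ?_ fun w _ => wordCube_compact w
  exact (List.finite_length_eq (Alpha d M) n).subset fun w hw => hw.1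

lemma wordCube_snoc (hM : 2 ≤ M) (w : List (Alpha d M)) (a : Alpha d M) : wordCube d M (w ++ [a]) ⊆ wordCube d M w := by
  intro x hx i
  have hi := hx i
  have hM0 : (0 : ℝ) < M := by positivity
  rw [wordBase_snoc _ _ _ hM] at hi
  have hpos : (0 : ℝ) < ((M : ℝ)⁻¹) ^ (w.length + 1) := by positivity
  have e1 : (M : ℝ) ^ (-((w ++ [a]).length : ℤ)) = ((M : ℝ)⁻¹) ^ (w.length + 1) := by
    rw [zpow_neg, zpow_natCast, inv_pow]; simp
  have e2 : (M : ℝ) ^ (-(w.length : ℤ)) = M * ((M : ℝ)⁻¹) ^ (w.length + 1) := by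
    rw [zpow_neg, zpow_natCast, inv_pow, pow_succ]; field_simp
  rw [e1] at hi
  rw [e2]
  have h0 : (0 : ℝ) ≤ ((a i : ℕ) : ℝ) := by positivity
  have h1 : ((a i : ℕ) : ℝ) + 1 ≤ M := by exact_mod_cast (a i).2
  constructor <;> nlinarith [hi.1, hi.2]

lemma approx_anti (hM : 2 ≤ M) (ω : PercSpace d M) : Antitone (approx d M ω) := by
  refine antitone_nat_of_succ_le fun n => ?_
  intro x hx
  obtain ⟨w, ⟨hw, hr⟩, hxw⟩ := mem_iUnion₂.1 hx
  have hne : w ≠ [] := by rintro rfl; simp at hw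
  refine mem_iUnion₂.2 ⟨w.dropLast, ⟨by simp [hw], fun u hu hp => hr u hu (hp.trans (List.dropLast_prefix w))⟩, ?_⟩
  rw [← List.dropLast_append_getLast hne] at hxw
  exact wordCube_snoc hM _ _ hxw

lemma interval_of_GG (hM : 2 ≤ M) {ω : PercSpace d M × PercSpace d M} (h : ee ω ∈ GG (M := M) (0 : Fin d → ℝ)) :
    ∃ a b : ℝ, a < b ∧ Set.Ioo a b ⊆
        {r | ∃ x ∈ percLimit d M ω.1, ∃ y ∈ percLimit d M ω.2, r = dist x y} := by
  obtain ⟨a, b, ha, hab, N, hN⟩ := h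
  refine ⟨a, b, by exact_mod_cast hab, fun r hr => ?_⟩
  have hne (n : ℕ) (hn : N ≤ n) : ∃ z ∈ approx d M ω.1 n ×ˢ approx d M ω.2 n, dist z.1 z.2 = r := by
    have hc : IsCompact ((fun z : EuclideanSpace ℝ (Fin d) × EuclideanSpace ℝ (Fin d) => dist z.1 z.2) '' 
        (approx d M ω.1 n ×ˢ approx d M ω.2 n)) :=
      ((approx_compact ω.1 n).prod (approx_compact ω.2 n)).image (by fun_prop)
    by_contra hcon
    have hr2 : r ∉ (fun z : EuclideanSpace ℝ (Fin d) × EuclideanSpace ℝ (Fin d) => dist z.1 z.2) '' 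
        (approx d M ω.1 n ×ˢ approx d M ω.2 n) := fun ⟨z, hz, he⟩ => hcon ⟨z, hz, he⟩
    obtain ⟨q, hq⟩ := (Rat.denseRange_cast (𝕜 := ℝ)).exists_mem_open (hc.isClosed.isOpen_compl.inter isOpen_Ioo) ⟨r, hr2, hr⟩
    obtain ⟨u, v, hu, hv, hru, hrv, x, hx, y, hy, he⟩ := hN n hn q (by exact_mod_cast hq.2.1) (by exact_mod_cast hq.2.2)
    refine hq.1 ⟨(x, y), ⟨mem_iUnion₂.2 ⟨u, ⟨hu, (ret_ee_false _ _).1 hru⟩, hx⟩, mem_iUnion₂.2 ⟨v, ⟨hv, (ret_ee_true _ _).1 hrv⟩, hy⟩⟩, ?_⟩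
    have hq0 : (0 : ℝ) ≤ q := le_trans (by exact_mod_cast ha.le) hq.2.1.le
    simp only
    rw [EuclideanSpace.dist_eq, ← Real.sqrt_sq hq0, ← he]
    congr 1
    refine Finset.sum_congr rfl fun l _ => ?_
    rw [Real.dist_eq, sq_abs]
    simp
  let K : ℕ → Set (EuclideanSpace ℝ (Fin d) × EuclideanSpace ℝ (Fin d)) := fun n => 
    (approx d M ω.1 (N + n) ×ˢ approx d M ω.2 (N + n)) ∩ {z | dist z.1 z.2 = r}
  have hcl : IsClosed {z : EuclideanSpace ℝ (Fin d) × EuclideanSpace ℝ (Fin d) | dist z.1 z.2 = r} :=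
    isClosed_eq (by fun_prop) continuous_const
  have hK (n) : IsCompact (K n) := ((approx_compact ω.1 _).prod (approx_compact ω.2 _)).inter_right hcl
  obtain ⟨z, hz⟩ := IsCompact.nonempty_iInter_of_sequence_nonempty_isCompact_isClosed K
    (fun n => inter_subset_inter_left _ (prod_mono (approx_anti hM _ (by omega)) (approx_anti hM _ (by omega))))
    (fun n => by
      obtain ⟨z, hz, he⟩ := hne (N + n) (by omega)
      exact ⟨z, hz, he⟩) (hK 0) (fun n => (hK n).isClosed)
  rw [mem_iInter] at hz
  refine ⟨z.1, mem_iInter₂.2 fun n _ => approx_anti hM _ (by omega) (hz n).1.1, z.2, 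
    mem_iInter₂.2 fun n _ => approx_anti hM _ (by omega) (hz n).1.2, (hz 0).2.symm⟩

end final

end

/-- if `p₁, p₂ > M⁻ᵈ` and `p₁ p₂ > M^{-2d+1}`, then conditioned on
both percolations being nonempty, almost surely the distance set `D(E₁, E₂)`
contains a nonempty open interval. -/
theorem distance_set_two_percolations
    (d M : ℕ) (hd : 1 ≤ d) (hM : 2 ≤ M)
    (p₁ p₂ : ℝ) (hp₁1 : p₁ ≤ 1) (hp₂1 : p₂ ≤ 1)
    (hp₁ : (M : ℝ) ^ (-(d : ℤ)) < p₁) (hp₂ : (M : ℝ) ^ (-(d : ℤ)) < p₂)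
    (hprod : (M : ℝ) ^ (1 - 2 * (d : ℤ)) < p₁ * p₂)
    (P : Measure (PercSpace d M × PercSpace d M))
    (hP : IsIndepBernoulliPair d M p₁ p₂ P) :
    ∀ᵐ ω ∂(ProbabilityTheory.cond P
        {ω | percLimit d M ω.1 ≠ ∅ ∧ percLimit d M ω.2 ≠ ∅}),
      ∃ a b : ℝ, a < b ∧ Set.Ioo a b ⊆
        {r | ∃ x ∈ percLimit d M ω.1, ∃ y ∈ percLimit d M ω.2, r = dist x y} := by
  have hB := isB_ee hP
  have hprob := hB.prob
  have hq1 : ∀ w : Word d M, (fun i : Idx d M => if i.1 = true then p₂ else p₁) (false, w) = p₁ := by simp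
  have hq2 : ∀ w : Word d M, (fun i : Idx d M => if i.1 = true then p₂ else p₁) (true, w) = p₂ := by simp
  have hp₁0 : 0 < p₁ := lt_trans (by positivity) hp₁
  have hp₂0 : 0 < p₂ := lt_trans (by positivity) hp₂
  obtain ⟨c, hc0, hc⟩ := propA hB hd hM hp₁1 hp₂1 hq1 hq2 hp₁ hp₂ hprod
  have hm : 0 < ENNReal.ofReal (min p₁ p₂) ^ 4 := by
    refine ENNReal.pow_pos ?_ 4
    rw [ENNReal.ofReal_pos]; exact lt_min hp₁0 hp₂0
  have hm1 : ENNReal.ofReal (min p₁ p₂) ^ 4 ≤ 1 := by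
    refine pow_le_one' ?_ 4
    rw [ENNReal.ofReal_le_one]; exact (min_le_left _ _).trans hp₁1
  have hnull : P.map ee ((⋂ k, alive d M k) \ GG 0) = 0 := by
    refine B3 (c := ENNReal.ofReal (min p₁ p₂) ^ 4 * min c 1) (ENNReal.mul_pos hm.ne' (lt_min hc0 one_pos).ne')
      (mul_le_one' hm1 (min_le_right _ _)) fun k A hA => B2 (fun u v hu hv A hA hAr => ?_) A hA
    refine B1 hB hd hM hp₁0 hp₂0 hp₁1 hp₂1 hq1 hq2 ?_ u v hu hv A hA hAr
    intro i Δ h3 hmax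
    exact (min_le_left _ _).trans (hc i Δ h3 hmax)
  have hGm : MeasurableSet (ee (d := d) (M := M) ⁻¹' (GG 0)ᶜ) := measurable_ee (measurableSet_GG 0).compl
  have hres : P.restrict {ω | percLimit d M ω.1 ≠ ∅ ∧ percLimit d M ω.2 ≠ ∅} (ee (d := d) (M := M) ⁻¹' (GG 0)ᶜ) = 0 := by
    rw [Measure.restrict_apply hGm]
    have hAm : MeasurableSet ((⋂ k, alive d M k) \ GG 0) :=
      (MeasurableSet.iInter fun k => meas_dep (alive_dep k)).diff (measurableSet_GG 0)
    rw [Measure.map_apply measurable_ee hAm] at hnull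
    refine measure_mono_null ?_ hnull
    rintro ω ⟨h1, h2, h3⟩
    exact ⟨mem_iInter.2 fun k => alive_ee h2 h3 k, h1⟩
  have hcond : (ProbabilityTheory.cond P {ω | percLimit d M ω.1 ≠ ∅ ∧ percLimit d M ω.2 ≠ ∅}) 
      (ee (d := d) (M := M) ⁻¹' (GG 0)ᶜ) = 0 := by
    rw [ProbabilityTheory.cond, Measure.smul_apply, hres, smul_zero]
  refine measure_mono_null ?_ hcond
  intro ω hω hG
  exact hω (interval_of_GG hM hG)
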